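/- Let p ∈ (1, ∞), and let Φ be a Φ-function with Φ ∈ (aInc)_p ∩ (Dec). There is a constant C depending only on Φ and p such that for every N-dimensional subspace X_N ⊂ C(Ω) with X_N ∈ NI_{2,∞}(H), every ε ∈ (0, 1/2], every δ ∈ (0, 1], and every m ≥ C·(εδ)^{-2}·(log((εδ)^{-1}))^{min{p,2}/2}·Φ(H^{2/min{p,2}})·(log 2N)²·log 2H², if x₁, …, x_m are i.i.d. random points in Ω distributed according to μ, then with probability at least 1 − δ/2 one has a_Φ(1)^{-1}(1−ε)‖f‖_Φ ≤ ‖f‖_{Φ,x} ≤ a_Φ(1)(1+ε)‖f‖_Φ for all f ∈ X_N. -/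

import Mathlib

open MeasureTheory

noncomputable section

/-- The sup-norm (uniform norm) `‖f‖_∞ = sup_{x ∈ Ω} |f x|` of a real-valued function. -/
def supNorm {Ω : Type*} (f : Ω → ℝ) : ℝ := ⨆ x, |f x|

/-- The Luxemburg functional `‖f‖_Φ = inf {λ > 0 : ∫ Φ(|f|/λ) dμ ≤ 1}`. -/
def luxNorm {Ω : Type*} [MeasurableSpace Ω] (μ : Measure Ω) (Φ : ℝ → ℝ) (f : Ω → ℝ) : ℝ :=
  sInf {lam : ℝ | 0 < lam ∧ ∫ x, Φ (|f x| / lam) ∂μ ≤ 1}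

/-- The discrete Luxemburg functional `‖f‖_{Φ,x}` with respect to the uniform discrete
probability measure `(1/m) ∑_{j=1}^m δ_{x_j}`. -/
def discLuxNorm {Ω : Type*} (Φ : ℝ → ℝ) {m : ℕ} (x : Fin m → Ω) (f : Ω → ℝ) : ℝ :=
  sInf {lam : ℝ | 0 < lam ∧ (∑ j, Φ (|f (x j)| / lam)) / (m : ℝ) ≤ 1}

/-- The weighted discrete Luxemburg functional `‖f‖_{Φ,x,λ}` with respect to the discrete
probability measure `∑_{j=1}^m λ_j δ_{x_j}`. -/
def wDiscLuxNorm {Ω : Type*} (Φ : ℝ → ℝ) {m : ℕ} (x : Fin m → Ω) (w : Fin m → ℝ)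
    (f : Ω → ℝ) : ℝ :=
  sInf {lam : ℝ | 0 < lam ∧ (∑ j, w j * Φ (|f (x j)| / lam)) ≤ 1}

/-- `Φ : [0,∞) → [0,∞)` is a Φ-prefunction: increasing, `Φ(0) = 0`, `Φ(0+) = 0`,
`Φ(∞) = ∞` (stated for a function on `ℝ`, with the relevant conditions on `[0,∞)`). -/
structure IsPhiPrefun (Φ : ℝ → ℝ) : Prop where
  mono : MonotoneOn Φ (Set.Ici 0)
  map_zero : Φ 0 = 0
  nonneg : ∀ t : ℝ, 0 ≤ t → 0 ≤ Φ t
  tendsto_zero : Filter.Tendsto Φ (nhdsWithin 0 (Set.Ioi 0)) (nhds 0)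
  tendsto_atTop : Filter.Tendsto Φ Filter.atTop Filter.atTop

/-- `Φ ∈ (aInc)_p` with constant `a`: `t ↦ Φ(t) t^{-p}` is almost increasing on `(0,∞)`. -/
def AIncP (Φ : ℝ → ℝ) (p a : ℝ) : Prop :=
  ∀ s t : ℝ, 0 < s → s < t → Φ s / s ^ p ≤ a * (Φ t / t ^ p)

/-- `Φ ∈ (Inc)_p` : `t ↦ Φ(t) t^{-p}` is increasing on `(0,∞)`. -/
def IncP (Φ : ℝ → ℝ) (p : ℝ) : Prop :=
  ∀ s t : ℝ, 0 < s → s < t → Φ s / s ^ p ≤ Φ t / t ^ p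

/-- `Φ ∈ (Dec)_q` : `t ↦ Φ(t) t^{-q}` is decreasing on `(0,∞)`. -/
def DecQ (Φ : ℝ → ℝ) (q : ℝ) : Prop :=
  ∀ s t : ℝ, 0 < s → s < t → Φ t / t ^ q ≤ Φ s / s ^ q

/-- `Φ ∈ (aDec)_q` with constant `b`: `t ↦ Φ(t) t^{-q}` is almost decreasing on `(0,∞)`. -/
def ADecQ (Φ : ℝ → ℝ) (q b : ℝ) : Prop :=
  ∀ s t : ℝ, 0 < s → s < t → Φ t / t ^ q ≤ b * (Φ s / s ^ q)

/-- `t ↦ Φ(t) t^{-p}` is almost increasing with constant `a` on `(t_*, ∞)`. -/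
def AIncPOn (Φ : ℝ → ℝ) (p a tstar : ℝ) : Prop :=
  ∀ s t : ℝ, tstar < s → s < t → Φ s / s ^ p ≤ a * (Φ t / t ^ p)

/-- `t ↦ Φ(t) t^{-q}` is almost decreasing with constant `b` on `(t_*, ∞)`. -/
def ADecQOn (Φ : ℝ → ℝ) (q b tstar : ℝ) : Prop :=
  ∀ s t : ℝ, tstar < s → s < t → Φ t / t ^ q ≤ b * (Φ s / s ^ q)

/-- Entropy numbers `e_n(F, d)` of a set `F` with respect to a distance-like function `dd`:
the infimum of `ε > 0` such that `F` can be covered by `2^{2^n}` (one, for `n = 0`)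
`ε`-balls centered in `F`. -/
def entropyNumD {X : Type*} (dd : X → X → ℝ) (F : Set X) (n : ℕ) : ℝ :=
  sInf {ε : ℝ | 0 < ε ∧ ∃ T : Finset X, ↑T ⊆ F ∧
    T.card ≤ (if n = 0 then 1 else 2 ^ 2 ^ n) ∧ ∀ f ∈ F, ∃ g ∈ T, dd f g < ε}

/-- Sampling numbers `ϱ_m(F, ‖·‖)`: recovery by linear methods from samples at `m` points. -/
def sampNum {Ω : Type*} (nrm : (Ω → ℝ) → ℝ) (F : Set (Ω → ℝ)) (m : ℕ) : ℝ :=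
  sInf {r : ℝ | ∃ (x : Fin m → Ω) (T : (Fin m → ℝ) →ₗ[ℝ] (Ω → ℝ)),
    r = ⨆ f ∈ F, nrm (fun y => f y - T (fun j => f (x j)) y)}

/-- Modified sampling numbers `ϱ*_m(F, ‖·‖)`: recovery by arbitrary methods mapping into a
subspace of dimension at most `m`, from samples at `m` points. -/
def sampNumStar {Ω : Type*} (nrm : (Ω → ℝ) → ℝ) (F : Set (Ω → ℝ)) (m : ℕ) : ℝ :=
  sInf {r : ℝ | ∃ (x : Fin m → Ω) (Y : Submodule ℝ (Ω → ℝ)), Module.finrank ℝ Y ≤ m ∧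
    ∃ T : (Fin m → ℝ) → Ω → ℝ, (∀ v, T v ∈ Y) ∧
    r = ⨆ f ∈ F, nrm (fun y => f y - T (fun j => f (x j)) y)}

/-- Kolmogorov width `d_N(F, ‖·‖_∞)` : infimum over `N`-dimensional subspaces of `C(Ω)` of the
worst-case best approximation error in the uniform norm. -/
def kolWidth {Ω : Type*} [TopologicalSpace Ω] (F : Set (Ω → ℝ)) (N : ℕ) : ℝ :=
  sInf {r : ℝ | ∃ X : Submodule ℝ (Ω → ℝ), Module.finrank ℝ X = N ∧
    (∀ u ∈ X, Continuous u) ∧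
    r = ⨆ f ∈ F, sInf ((fun u => supNorm (fun y => f y - u y)) '' (X : Set (Ω → ℝ)))}

end

open MeasureTheory

set_option linter.unusedSectionVars false

section Gauss
variable {E : Type*} [NormedAddCommGroup E] [InnerProductSpace ℝ E] [FiniteDimensional ℝ E]
  [MeasurableSpace E] [BorelSpace E]

/-- Unnormalised Gaussian density. -/
noncomputable def gw (x : E) : ENNReal := ENNReal.ofReal (Real.exp (-‖x‖ ^ 2 / 2))

/-- Unnormalised Gaussian measure. -/
noncomputable def gam (E : Type*) [NormedAddCommGroup E] [InnerProductSpace ℝ E]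
    [FiniteDimensional ℝ E] [MeasurableSpace E] [BorelSpace E] : Measure E :=
  (volume : Measure E).withDensity gw

lemma measurable_gw : Measurable (gw : E → ENNReal) := by
  unfold gw
  fun_prop

lemma gam_univ_lt_top : gam E Set.univ < ⊤ := by
  have h := GaussianFourier.integrable_cexp_neg_mul_sq_norm_add (V := E) (b := (1/2 : ℂ))
    (by norm_num) 0 0
  have h2 := h.norm
  rw [gam, withDensity_apply _ MeasurableSet.univ, Measure.restrict_univ]
  have h3 := h2.lintegral_lt_top
  refine lt_of_le_of_lt (le_of_eq ?_) h3
  refine lintegral_congr fun x => ?_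
  unfold gw
  congr 1
  rw [Complex.norm_exp]
  congr 1
  simp [← Complex.ofReal_pow]
  ring

lemma gam_univ_ne_zero : gam E Set.univ ≠ 0 := by
  rw [gam, withDensity_apply _ MeasurableSet.univ, Measure.restrict_univ]
  intro h
  rw [lintegral_eq_zero_iff measurable_gw] at h
  have : ∀ x : E, gw x ≠ 0 := by
    intro x; unfold gw; simp [Real.exp_pos]
  have h2 : ∀ᵐ x ∂(volume : Measure E), False := by
    filter_upwards [h] with x hx
    exact this x hx
  have h3 : (volume : Measure E) Set.univ = 0 := by
    rw [ae_iff] at h2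
    simpa using h2
  have h4 := (isOpen_univ (X := E)).measure_pos (volume : Measure E) Set.univ_nonempty
  exact h4.ne' h3

lemma gam_shift (K : Set E) (hK : MeasurableSet K) (hs : ∀ x ∈ K, -x ∈ K) (y : E) :
    ENNReal.ofReal (Real.exp (-‖y‖ ^ 2 / 2)) * gam E K ≤ gam E {x | x - y ∈ K} := by
  have hm : MeasurableSet {x : E | x - y ∈ K} := hK.preimage (measurable_id.sub_const y)
  set f : E → ENNReal := K.indicator 1 with hf
  have hfm : Measurable f := measurable_one.indicator hK
  have hfs : ∀ x, f (-x) = f x := by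
    intro x
    by_cases hx : x ∈ K
    · simp [hf, hx, hs x hx]
    · have : -x ∉ K := fun h => hx (by simpa using hs _ h)
      simp [hf, hx, this]
  have e1 : gam E {x | x - y ∈ K} = ∫⁻ x, f x * gw (x + y) := by
    rw [gam, withDensity_apply _ hm, ← lintegral_indicator hm,
      ← lintegral_add_right_eq_self _ y]
    refine lintegral_congr fun x => ?_
    by_cases hx : x ∈ K <;> simp [hf, Set.indicator, hx]
  have e2 : ∫⁻ x, f x * gw (x + y) = ∫⁻ x, f x * gw (-x + y) := by
    rw [← lintegral_neg_eq_self]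
    refine lintegral_congr fun x => ?_
    rw [hfs]
  have e3 : gam E K = ∫⁻ x, f x * gw x := by
    rw [gam, withDensity_apply _ hK, ← lintegral_indicator hK]
    refine lintegral_congr fun x => ?_
    by_cases hx : x ∈ K <;> simp [hf, Set.indicator, hx]
  have hw : ∀ x : E, 2 * (ENNReal.ofReal (Real.exp (-‖y‖ ^ 2 / 2)) * gw x)
      ≤ gw (x + y) + gw (-x + y) := by
    intro x
    unfold gw
    rw [← ENNReal.ofReal_mul (by positivity), ← ENNReal.ofReal_add (by positivity) (by positivity),
      show (2 : ENNReal) = ENNReal.ofReal 2 by simp, ← ENNReal.ofReal_mul (by positivity)]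
    apply ENNReal.ofReal_le_ofReal
    have h1 : -‖x + y‖ ^ 2 / 2 = (-‖y‖ ^ 2 / 2 + -‖x‖ ^ 2 / 2) + -inner ℝ x y := by
      rw [@norm_add_sq_real]; ring
    have h2 : -‖-x + y‖ ^ 2 / 2 = (-‖y‖ ^ 2 / 2 + -‖x‖ ^ 2 / 2) + inner ℝ x y := by
      rw [@norm_add_sq_real, norm_neg, inner_neg_left]; ring
    rw [h1, h2, Real.exp_add _ (-inner ℝ x y), Real.exp_add _ (inner ℝ x y), ← Real.exp_add]
    have h3 := Real.one_le_cosh (inner ℝ x y)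
    rw [Real.cosh_eq] at h3
    have h4 := Real.exp_pos (-‖y‖ ^ 2 / 2 + -‖x‖ ^ 2 / 2)
    nlinarith
  have key : 2 * (ENNReal.ofReal (Real.exp (-‖y‖ ^ 2 / 2)) * gam E K)
      ≤ 2 * gam E {x | x - y ∈ K} := by
    rw [two_mul (gam E {x | x - y ∈ K})]
    nth_rewrite 2 [e1]
    rw [e1]
    nth_rewrite 2 [e2]
    rw [e3, ← lintegral_const_mul (f := fun x => f x * gw x) _ (hfm.mul measurable_gw),
      ← lintegral_const_mul (f := fun x => _ * (f x * gw x)) _ ((hfm.mul measurable_gw).const_mul _),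
      ← lintegral_add_left (f := fun x => f x * gw (x + y))
        (hfm.mul (measurable_gw.comp (measurable_id.add_const y)))]
    refine lintegral_mono fun x => ?_
    calc 2 * (ENNReal.ofReal (Real.exp (-‖y‖ ^ 2 / 2)) * (f x * gw x))
        = f x * (2 * (ENNReal.ofReal (Real.exp (-‖y‖ ^ 2 / 2)) * gw x)) := by ring
      _ ≤ f x * (gw (x + y) + gw (-x + y)) := by gcongr; exact hw x
      _ = _ := by ring
  exact (ENNReal.mul_le_mul_iff_right (by norm_num) (by norm_num)).1 key

lemma gam_mgf (u : E) : ∫⁻ x, ENNReal.ofReal (Real.exp (inner ℝ u x)) ∂(gam E)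
    = ENNReal.ofReal (Real.exp (‖u‖ ^ 2 / 2)) * gam E Set.univ := by
  rw [gam, lintegral_withDensity_eq_lintegral_mul _ measurable_gw (by fun_prop),
    withDensity_apply _ MeasurableSet.univ, Measure.restrict_univ,
    ← lintegral_const_mul _ measurable_gw]
  rw [← lintegral_add_right_eq_self _ u]
  refine lintegral_congr fun x => ?_
  simp only [Pi.mul_apply]
  unfold gw
  rw [← ENNReal.ofReal_mul (by positivity), ← ENNReal.ofReal_mul (by positivity),
    ← Real.exp_add, ← Real.exp_add]
  congr 2
  rw [@norm_add_sq_real, inner_add_right, real_inner_self_eq_norm_sq, real_inner_comm]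
  ring

lemma gam_markov (g : E → ENNReal) (hg : Measurable g) (B : ENNReal) (hB : B ≠ ⊤) (hB0 : B ≠ 0)
    (h : ∫⁻ x, g x ∂(gam E) ≤ B * gam E Set.univ) :
    gam E Set.univ ≤ 2 * gam E {x | g x ≤ 2 * B} := by
  set Z := gam E Set.univ with hZ
  have hZt : Z ≠ ⊤ := gam_univ_lt_top.ne
  have hm : MeasurableSet {x | g x ≤ 2 * B} := measurableSet_le hg measurable_const
  have h1 : (2 * B) * gam E {x | g x ≤ 2 * B}ᶜ ≤ B * Z := by
    refine le_trans ?_ h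
    refine le_trans ?_ (mul_meas_ge_le_lintegral₀ hg.aemeasurable (2 * B))
    gcongr
    intro x hx
    simp only [Set.mem_compl_iff, Set.mem_ofPred_eq, not_le] at hx ⊢
    exact hx.le
  have h2 : 2 * gam E {x | g x ≤ 2 * B}ᶜ ≤ Z := by
    have h1' : B * (2 * gam E {x | g x ≤ 2 * B}ᶜ) ≤ B * Z := by
      rw [← mul_assoc, mul_comm B 2]; exact h1
    exact (ENNReal.mul_le_mul_iff_right hB0 hB).1 h1'
  have h3 : gam E {x | g x ≤ 2 * B} + gam E {x | g x ≤ 2 * B}ᶜ = Z := measure_add_measure_compl hm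
  have h4 : Z + Z ≤ 2 * gam E {x | g x ≤ 2 * B} + Z := by
    calc Z + Z = 2 * Z := (two_mul Z).symm
      _ = 2 * gam E {x | g x ≤ 2 * B} + 2 * gam E {x | g x ≤ 2 * B}ᶜ := by rw [← h3, mul_add]
      _ ≤ _ := by gcongr
  exact (ENNReal.add_le_add_iff_right hZt).1 h4

lemma gam_half {K : Set E} (hK : MeasurableSet K) (h : 2 * gam E Kᶜ ≤ gam E Set.univ) :
    gam E Set.univ ≤ 2 * gam E K := by
  set Z := gam E Set.univ with hZ
  have hZt : Z ≠ ⊤ := gam_univ_lt_top.ne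
  have h3 : gam E K + gam E Kᶜ = Z := measure_add_measure_compl hK
  have h4 : Z + Z ≤ 2 * gam E K + Z := by
    calc Z + Z = 2 * Z := (two_mul Z).symm
      _ = 2 * gam E K + 2 * gam E Kᶜ := by rw [← h3, mul_add]
      _ ≤ _ := by gcongr
  exact (ENNReal.add_le_add_iff_right hZt).1 h4

lemma gam_tail1 (u : E) (h τ : ℝ) (hh : 0 < h) (hu : ‖u‖ ≤ h) (hτ : 0 ≤ τ) :
    gam E {x | τ < inner ℝ u x} ≤
      ENNReal.ofReal (Real.exp (-(τ ^ 2 / (2 * h ^ 2)))) * gam E Set.univ := by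
  have h1 := gam_mgf ((τ / h ^ 2) • u)
  have h2 : ENNReal.ofReal (Real.exp (τ ^ 2 / h ^ 2)) * gam E {x | τ < inner ℝ u x}
      ≤ ENNReal.ofReal (Real.exp (τ ^ 2 / (2 * h ^ 2))) * gam E Set.univ := by
    calc _ ≤ ENNReal.ofReal (Real.exp (τ ^ 2 / h ^ 2)) * gam E {x | ENNReal.ofReal
              (Real.exp (τ ^ 2 / h ^ 2)) ≤
              ENNReal.ofReal (Real.exp (inner ℝ ((τ / h ^ 2) • u) x))} := by
            refine mul_le_mul_right (measure_mono fun x hx => ?_) _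
            simp only [Set.mem_ofPred_eq] at hx ⊢
            apply ENNReal.ofReal_le_ofReal
            rw [Real.exp_le_exp, real_inner_smul_left]
            have : τ ^ 2 / h ^ 2 = τ / h ^ 2 * τ := by ring
            rw [this]
            gcongr
      _ ≤ _ := mul_meas_ge_le_lintegral₀ (by fun_prop) _
      _ = _ := h1
      _ ≤ _ := by
            gcongr ENNReal.ofReal (Real.exp ?_) * _
            rw [norm_smul, Real.norm_of_nonneg (by positivity)]
            calc (τ / h ^ 2 * ‖u‖) ^ 2 / 2 ≤ (τ / h ^ 2 * h) ^ 2 / 2 := by gcongr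
              _ = τ ^ 2 / (2 * h ^ 2) := by field_simp
  have h3 : ENNReal.ofReal (Real.exp (τ ^ 2 / (2 * h ^ 2)))
      = ENNReal.ofReal (Real.exp (τ ^ 2 / h ^ 2)) *
        ENNReal.ofReal (Real.exp (-(τ ^ 2 / (2 * h ^ 2)))) := by
    rw [← ENNReal.ofReal_mul (by positivity), ← Real.exp_add]
    congr 2
    field_simp; ring
  rw [h3, mul_assoc] at h2
  exact (ENNReal.mul_le_mul_iff_right (by simp [Real.exp_pos]) (by simp)).1 h2

lemma gam_sup {m : ℕ} (hm : 1 ≤ m) (u : Fin m → E) (h : ℝ) (hh : 0 < h) (hu : ∀ j, ‖u j‖ ≤ h) :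
    gam E Set.univ ≤ 2 * gam E {x | ∀ j, |inner ℝ (u j) x| ≤ h * √(2 * Real.log (4 * m))} := by
  set τ := h * √(2 * Real.log (4 * m)) with hτ
  have hm' : (1 : ℝ) ≤ m := by exact_mod_cast hm
  have hlog : 0 ≤ Real.log (4 * m) := Real.log_nonneg (by linarith)
  have hτ0 : 0 ≤ τ := by positivity
  have hK : MeasurableSet {x : E | ∀ j, |inner ℝ (u j) x| ≤ τ} := by
    rw [Set.ofPred_forall]
    refine MeasurableSet.iInter fun j => ?_
    exact measurableSet_le (by fun_prop) measurable_const
  apply gam_half hK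
  have hexp : Real.exp (-(τ ^ 2 / (2 * h ^ 2))) = (4 * (m : ℝ))⁻¹ := by
    have : τ ^ 2 / (2 * h ^ 2) = Real.log (4 * m) := by
      rw [hτ, mul_pow, Real.sq_sqrt (by positivity)]
      field_simp
    rw [this, Real.exp_neg, Real.exp_log (by linarith)]
  have hsub : {x : E | ∀ j, |inner ℝ (u j) x| ≤ τ}ᶜ ⊆
      ⋃ j, ({x | τ < inner ℝ (u j) x} ∪ {x | τ < inner ℝ (-u j) x}) := by
    intro x hx
    simp only [Set.mem_compl_iff, Set.mem_ofPred_eq, not_forall, not_le] at hx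
    obtain ⟨j, hj⟩ := hx
    simp only [Set.mem_iUnion, Set.mem_union, Set.mem_ofPred_eq, inner_neg_left]
    exact ⟨j, lt_abs.1 hj⟩
  have hb : ∀ j, gam E ({x | τ < inner ℝ (u j) x} ∪ {x | τ < inner ℝ (-u j) x}) ≤
      ENNReal.ofReal (2 * (4 * (m : ℝ))⁻¹) * gam E Set.univ := by
    intro j
    refine (measure_union_le _ _).trans ?_
    have t1 := gam_tail1 (u j) h τ hh (hu j) hτ0
    have t2 := gam_tail1 (-u j) h τ hh (by rw [norm_neg]; exact hu j) hτ0
    rw [hexp] at t1 t2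
    rw [two_mul, ENNReal.ofReal_add (by positivity) (by positivity), add_mul]
    exact add_le_add t1 t2
  calc 2 * gam E {x : E | ∀ j, |inner ℝ (u j) x| ≤ τ}ᶜ
      ≤ 2 * ∑ j : Fin m, ENNReal.ofReal (2 * (4 * (m : ℝ))⁻¹) * gam E Set.univ := by
        gcongr
        refine (measure_mono hsub).trans ((measure_iUnion_fintype_le _ _).trans ?_)
        exact Finset.sum_le_sum fun j _ => hb j
    _ = gam E Set.univ := by
        rw [Finset.sum_const, Finset.card_univ, Fintype.card_fin, nsmul_eq_mul, ← mul_assoc,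
          ← mul_assoc]
        have : (2 : ENNReal) * (m : ENNReal) * ENNReal.ofReal (2 * (4 * (m : ℝ))⁻¹) = 1 := by
          rw [show (2 : ENNReal) = ENNReal.ofReal 2 by simp, ← ENNReal.ofReal_natCast m,
            ← ENNReal.ofReal_mul (by positivity), ← ENNReal.ofReal_mul (by positivity),
            ← ENNReal.ofReal_one]
          congr 1
          field_simp; norm_num
        rw [this, one_mul]

lemma gam_moment (u : E) (h : ℝ) (hh : 0 < h) (hu : ‖u‖ ≤ h) (k : ℕ) (hk : 1 ≤ k) :
    ∫⁻ x, ENNReal.ofReal ((inner ℝ u x) ^ (2 * k)) ∂(gam E)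
      ≤ ENNReal.ofReal (2 * (6 * k * h ^ 2) ^ k) * gam E Set.univ := by
  have hk' : (1 : ℝ) ≤ k := by exact_mod_cast hk
  set l : ℝ := √(2 * k) / h with hl
  have hl0 : 0 < l := by positivity
  have hl2 : l ^ 2 = 2 * k / h ^ 2 := by
    rw [hl, div_pow, Real.sq_sqrt (by positivity)]
  have hpt : ∀ x : E, (inner ℝ u x) ^ (2 * k) ≤ ((2 * k) ^ k * h ^ (2 * k)) *
      (Real.exp (inner ℝ (l • u) x) + Real.exp (inner ℝ (-(l • u)) x)) := by
    intro x
    rw [inner_neg_left, real_inner_smul_left]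
    set y : ℝ := inner ℝ u x
    have h1 : |l * y| ^ (2 * k) / (2 * k).factorial ≤ Real.exp |l * y| :=
      Real.pow_div_factorial_le_exp _ (abs_nonneg _) _
    have h2 : Real.exp |l * y| ≤ Real.exp (l * y) + Real.exp (-(l * y)) := by
      rcases abs_cases (l * y) with ⟨h, _⟩ | ⟨h, _⟩ <;> rw [h] <;>
        linarith [Real.exp_pos (l * y), Real.exp_pos (-(l * y))]
    have h3 : ((2 * k).factorial : ℝ) ≤ (2 * k) ^ (2 * k) := by
      exact_mod_cast Nat.factorial_le_pow (2 * k)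
    rw [div_le_iff₀ (by positivity)] at h1
    have h4 : |l * y| ^ (2 * k) = l ^ (2 * k) * y ^ (2 * k) := by
      rw [pow_mul, sq_abs, ← pow_mul, mul_pow]
    have h5 : l ^ (2 * k) = (2 * k) ^ k / h ^ (2 * k) := by
      rw [pow_mul, hl2, div_pow, ← pow_mul]
    rw [h4, h5] at h1
    have h6 : (2 * (k : ℝ)) ^ k / h ^ (2 * k) * y ^ (2 * k) ≤
        (Real.exp (l * y) + Real.exp (-(l * y))) * (2 * k) ^ (2 * k) :=
      h1.trans (mul_le_mul h2 h3 (by positivity) (by positivity))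
    have h7 : (2 * (k : ℝ)) ^ (2 * k) = (2 * k) ^ k * (2 * k) ^ k := by
      rw [two_mul k, pow_add]
    rw [h7, div_mul_eq_mul_div, div_le_iff₀ (by positivity)] at h6
    have h8 : (0 : ℝ) < (2 * k) ^ k := by positivity
    have h9 : (2 * (k : ℝ)) ^ k * y ^ (2 * k) ≤ (2 * (k : ℝ)) ^ k * (((2 * k) ^ k * h ^ (2 * k)) *
      (Real.exp (l * y) + Real.exp (-(l * y)))) := by linarith
    exact le_of_mul_le_mul_left h9 h8
  have hexp : Real.exp (‖l • u‖ ^ 2 / 2) ≤ 3 ^ k := by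
    rw [norm_smul, mul_pow, Real.norm_of_nonneg hl0.le, hl2]
    have : 2 * (k : ℝ) / h ^ 2 * ‖u‖ ^ 2 / 2 ≤ (k : ℝ) := by
      calc 2 * (k : ℝ) / h ^ 2 * ‖u‖ ^ 2 / 2 ≤ 2 * (k : ℝ) / h ^ 2 * h ^ 2 / 2 := by gcongr
        _ = (k : ℝ) := by field_simp
    refine (Real.exp_le_exp.2 this).trans ?_
    rw [← mul_one (k : ℝ), Real.exp_nat_mul]
    gcongr
    exact Real.exp_one_lt_three.le
  calc ∫⁻ x, ENNReal.ofReal ((inner ℝ u x) ^ (2 * k)) ∂(gam E)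
      ≤ ∫⁻ x, ENNReal.ofReal ((2 * k) ^ k * h ^ (2 * k)) *
        (ENNReal.ofReal (Real.exp (inner ℝ (l • u) x)) +
          ENNReal.ofReal (Real.exp (inner ℝ (-(l • u)) x))) ∂(gam E) := by
        refine lintegral_mono fun x => ?_
        rw [← ENNReal.ofReal_add (by positivity) (by positivity),
          ← ENNReal.ofReal_mul (by positivity)]
        exact ENNReal.ofReal_le_ofReal (hpt x)
    _ = ENNReal.ofReal ((2 * k) ^ k * h ^ (2 * k)) *
        (2 * (ENNReal.ofReal (Real.exp (‖l • u‖ ^ 2 / 2)) * gam E Set.univ)) := by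
        rw [lintegral_const_mul _ (by fun_prop), lintegral_add_left (by fun_prop), gam_mgf, gam_mgf,
          norm_neg, ← two_mul (ENNReal.ofReal (Real.exp (‖l • u‖ ^ 2 / 2)) * gam E Set.univ)]
    _ ≤ ENNReal.ofReal ((2 * k) ^ k * h ^ (2 * k)) *
        (2 * (ENNReal.ofReal (3 ^ k) * gam E Set.univ)) := by gcongr
    _ = _ := by
        rw [← mul_assoc, ← mul_assoc, show (2 : ENNReal) = ENNReal.ofReal 2 by simp,
          ← ENNReal.ofReal_mul (by positivity), ← ENNReal.ofReal_mul (by positivity)]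
        congr 2
        rw [show (6 * (k : ℝ) * h ^ 2) = (2 * k) * h ^ 2 * 3 by ring, mul_pow _ (3 : ℝ),
          mul_pow (2 * (k : ℝ)) (h ^ 2), ← pow_mul]
        ring

open Classical in
lemma packing (T : Finset E) (a0 : E) (ρ c : ℝ) (hc : 0 ≤ c) (hT : ∀ a ∈ T, ‖a - a0‖ ≤ ρ)
    (K : Set E) (hK : MeasurableSet K) (hs : ∀ x ∈ K, -x ∈ K)
    (hγ : gam E Set.univ ≤ 2 * gam E K) :
    ∃ F ⊆ T, (F.card : ℝ) ≤ 2 * Real.exp ((c * ρ) ^ 2 / 2) ∧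
      ∀ a ∈ T, ∃ f ∈ F, ∃ k ∈ K, ∃ k' ∈ K, c • (a - f) = k - k' := by
  have hK0 : gam E K ≠ 0 := by
    intro h
    rw [h, mul_zero] at hγ
    exact gam_univ_ne_zero (le_antisymm hγ bot_le)
  have hKne : K.Nonempty := by
    rw [Set.nonempty_iff_ne_empty]; rintro rfl; simp at hK0
  have hKtop : gam E K ≠ ⊤ := ne_top_of_le_ne_top gam_univ_lt_top.ne (measure_mono (Set.subset_univ _))
  let S : E → Set E := fun f => {x | x - c • (f - a0) ∈ K}
  have hSm : ∀ f, MeasurableSet (S f) := fun f => hK.preimage (measurable_id.sub_const _)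
  let P : Finset (Finset E) := T.powerset.filter (fun F => (F : Set E).PairwiseDisjoint S)
  have hP : P.Nonempty := ⟨∅, by simp [P]⟩
  obtain ⟨F, hF, hmax⟩ := Finset.exists_max_image P Finset.card hP
  simp only [P, Finset.mem_filter, Finset.mem_powerset] at hF hmax
  refine ⟨F, hF.1, ?_, ?_⟩
  · have h1 : ∑ f ∈ F, gam E (S f) ≤ gam E Set.univ := by
      rw [← measure_biUnion_finset hF.2 (fun f _ => hSm f)]
      exact measure_mono (Set.subset_univ _)
    have h2 : ∀ f ∈ F, ENNReal.ofReal (Real.exp (-(c * ρ) ^ 2 / 2)) * gam E K ≤ gam E (S f) := by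
      intro f hf
      refine le_trans ?_ (gam_shift K hK hs (c • (f - a0)))
      gcongr
      rw [norm_smul, Real.norm_of_nonneg hc]
      have := hT f (hF.1 hf)
      gcongr
    have h3 : (F.card : ENNReal) * (ENNReal.ofReal (Real.exp (-(c * ρ) ^ 2 / 2)) * gam E K)
        ≤ 2 * gam E K := by
      refine le_trans ?_ (h1.trans hγ)
      rw [← nsmul_eq_mul]
      exact Finset.card_nsmul_le_sum _ _ _ h2
    rw [← mul_assoc] at h3
    have h4 := (ENNReal.mul_le_mul_iff_left hK0 hKtop).1 h3
    have h5 : (F.card : ℝ) * Real.exp (-(c * ρ) ^ 2 / 2) ≤ 2 := by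
      have := ENNReal.toReal_mono (by norm_num) h4
      simpa [ENNReal.toReal_ofReal (Real.exp_pos _).le] using this
    have h6 : -(c * ρ) ^ 2 / 2 = -((c * ρ) ^ 2 / 2) := by ring
    rw [h6, Real.exp_neg, ← div_eq_mul_inv, div_le_iff₀ (Real.exp_pos _)] at h5
    exact h5
  · intro a ha
    by_cases haF : a ∈ F
    · obtain ⟨k, hk⟩ := hKne
      exact ⟨a, haF, k, hk, k, hk, by simp⟩
    by_contra! hcon
    have hd : ((insert a F : Finset E) : Set E).PairwiseDisjoint S := by
      rw [Finset.coe_insert]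
      refine hF.2.insert ?_
      intro f hf _
      rw [Set.disjoint_left]
      intro x hx hx'
      refine hcon f hf _ hx' _ hx ?_
      rw [sub_sub_sub_cancel_left, ← smul_sub]
      congr 1; abel
    have := hmax (insert a F) ⟨Finset.insert_subset ha hF.1, hd⟩
    rw [Finset.card_insert_of_notMem haF] at this
    omega

lemma gam_L2k {Ω : Type*} [MeasurableSpace Ω] (μ : Measure Ω) [IsProbabilityMeasure μ]
    (u : Ω → E) (hum : Measurable u) (h : ℝ) (hh : 0 < h) (hu : ∀ y, ‖u y‖ ≤ h)
    (k : ℕ) (hk : 1 ≤ k) :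
    MeasurableSet {x : E | ∫⁻ y, ENNReal.ofReal ((inner ℝ (u y) x) ^ (2 * k)) ∂μ
      ≤ ENNReal.ofReal ((24 * k * h ^ 2) ^ k)} ∧
    gam E Set.univ ≤ 2 * gam E {x | ∫⁻ y, ENNReal.ofReal ((inner ℝ (u y) x) ^ (2 * k)) ∂μ
      ≤ ENNReal.ofReal ((24 * k * h ^ 2) ^ k)} := by
  have hk' : (1 : ℝ) ≤ k := by exact_mod_cast hk
  have : IsFiniteMeasure (gam E) := ⟨gam_univ_lt_top⟩
  have hj : Measurable (Function.uncurry fun (x : E) (y : Ω) =>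
      ENNReal.ofReal ((inner ℝ (u y) x) ^ (2 * k))) := by
    unfold Function.uncurry
    fun_prop
  have hg : Measurable fun x : E => ∫⁻ y, ENNReal.ofReal ((inner ℝ (u y) x) ^ (2 * k)) ∂μ :=
    hj.lintegral_prod_right
  refine ⟨measurableSet_le hg measurable_const, ?_⟩
  have h1 := gam_markov _ hg (ENNReal.ofReal (2 * (6 * k * h ^ 2) ^ k)) ENNReal.ofReal_ne_top
    (by rw [ne_eq, ENNReal.ofReal_eq_zero, not_le]; positivity) (by
      rw [lintegral_lintegral_swap hj.aemeasurable]
      calc _ ≤ ∫⁻ y, ENNReal.ofReal (2 * (6 * k * h ^ 2) ^ k) * gam E Set.univ ∂μ :=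
            lintegral_mono fun y => gam_moment (u y) h hh (hu y) k hk
        _ = _ := by simp)
  refine h1.trans ?_
  refine mul_le_mul_right (measure_mono fun x hx => ?_) _
  simp only [Set.mem_ofPred_eq] at hx ⊢
  refine hx.trans ?_
  rw [show (2 : ENNReal) = ENNReal.ofReal 2 by simp, ← ENNReal.ofReal_mul (by positivity)]
  apply ENNReal.ofReal_le_ofReal
  rw [show 24 * (k : ℝ) * h ^ 2 = 4 * (6 * k * h ^ 2) by ring, mul_pow 4]
  have : (4 : ℝ) ≤ 4 ^ k := by
    calc (4 : ℝ) = 4 ^ 1 := by norm_num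
      _ ≤ 4 ^ k := pow_le_pow_right₀ (by norm_num) hk
  have h0 : 0 ≤ (6 * (k : ℝ) * h ^ 2) ^ k := by positivity
  nlinarith

lemma gam_L2 (N : ℕ) (hN : 1 ≤ N) :
    gam (EuclideanSpace ℝ (Fin N)) Set.univ
      ≤ 2 * gam (EuclideanSpace ℝ (Fin N)) {x | ‖x‖ ^ 2 ≤ 24 * N} := by
  have hN' : (1 : ℝ) ≤ N := by exact_mod_cast hN
  have h1 := gam_markov (E := EuclideanSpace ℝ (Fin N)) (fun x => ENNReal.ofReal (‖x‖ ^ 2))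
    (by fun_prop) (ENNReal.ofReal (12 * N)) ENNReal.ofReal_ne_top
    (by rw [ne_eq, ENNReal.ofReal_eq_zero, not_le]; positivity) (by
      have : ∀ x : EuclideanSpace ℝ (Fin N), ENNReal.ofReal (‖x‖ ^ 2) =
          ∑ i, ENNReal.ofReal ((inner ℝ (EuclideanSpace.basisFun (Fin N) ℝ i) x) ^ (2 * 1)) := by
        intro x
        rw [← ENNReal.ofReal_sum_of_nonneg (fun i _ => by rw [pow_mul]; positivity), EuclideanSpace.norm_sq_eq]
        congr 1
        refine Finset.sum_congr rfl fun i _ => ?_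
        simp [EuclideanSpace.inner_single_left]
      simp_rw [this]
      rw [lintegral_finsetSum _ (fun i _ => by fun_prop)]
      calc _ ≤ ∑ i : Fin N, ENNReal.ofReal (2 * (6 * (1 : ℕ) * (1 : ℝ) ^ 2) ^ 1) *
            gam (EuclideanSpace ℝ (Fin N)) Set.univ :=
            Finset.sum_le_sum fun i _ => gam_moment _ 1 one_pos (by simp) 1 le_rfl
        _ = _ := by
            rw [Finset.sum_const, Finset.card_univ, Fintype.card_fin, nsmul_eq_mul, ← mul_assoc,
              ← ENNReal.ofReal_natCast N, ← ENNReal.ofReal_mul (by positivity)]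
            congr 2
            norm_num; ring)
  refine h1.trans ?_
  refine mul_le_mul_right (measure_mono fun x hx => ?_) _
  simp only [Set.mem_ofPred_eq] at hx ⊢
  have h2 : 2 * ENNReal.ofReal (12 * N) = ENNReal.ofReal (24 * N) := by
    rw [show (2 : ENNReal) = ENNReal.ofReal 2 by simp, ← ENNReal.ofReal_mul (by positivity)]
    congr 1; ring
  rw [h2, ENNReal.ofReal_le_ofReal_iff (by positivity)] at hx
  exact hx
end Gauss

open MeasureTheory

set_option linter.unusedSectionVars false

section Cover

/-- Internal covering of `T` by at most `n` elements of `T` w.r.t. the relation `R (a - f)`. -/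
def Cov {E : Type*} [AddCommGroup E] (T : Finset E) (n : ℝ) (R : E → Prop) : Prop :=
  ∃ F ⊆ T, (F.card : ℝ) ≤ n ∧ ∀ a ∈ T, ∃ f ∈ F, R (a - f)

lemma Cov.mono {E : Type*} [AddCommGroup E] {T : Finset E} {n n' : ℝ} {R R' : E → Prop}
    (h : Cov T n R) (hn : n ≤ n') (hR : ∀ a ∈ T, ∀ b ∈ T, R (a - b) → R' (a - b)) : Cov T n' R' := by
  obtain ⟨F, hF, hc, h⟩ := h
  refine ⟨F, hF, hc.trans hn, fun a ha => ?_⟩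
  obtain ⟨f, hf, hr⟩ := h a ha
  exact ⟨f, hf, hR a ha f (hF hf) hr⟩

open Classical in
lemma cov_step {E : Type*} [NormedAddCommGroup E] [InnerProductSpace ℝ E] [FiniteDimensional ℝ E]
    [MeasurableSpace E] [BorelSpace E] (T : Finset E) (n : ℝ) (R1 R2 : E → Prop)
    (hcov : Cov T n R1) (ρ c : ℝ) (hc : 0 ≤ c)
    (hρ : ∀ a ∈ T, ∀ b ∈ T, R1 (a - b) → ‖a - b‖ ≤ ρ)
    (K : Set E) (hK : MeasurableSet K) (hs : ∀ x ∈ K, -x ∈ K)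
    (hγ : gam E Set.univ ≤ 2 * gam E K)
    (hR2 : ∀ d, ∀ k ∈ K, ∀ k' ∈ K, c • d = k - k' → R2 d) :
    Cov T (n * (2 * Real.exp ((c * ρ) ^ 2 / 2))) R2 := by
  obtain ⟨F, hFT, hFn, hF⟩ := hcov
  have hp : ∀ f : E, f ∈ F → ∃ G ⊆ T.filter (fun a => R1 (a - f)),
      (G.card : ℝ) ≤ 2 * Real.exp ((c * ρ) ^ 2 / 2) ∧
      ∀ a ∈ T.filter (fun a => R1 (a - f)), ∃ g ∈ G, ∃ k ∈ K, ∃ k' ∈ K, c • (a - g) = k - k' := by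
    intro f hf
    refine packing _ f ρ c hc ?_ K hK hs hγ
    intro a ha
    rw [Finset.mem_filter] at ha
    exact hρ a ha.1 f (hFT hf) ha.2
  choose! G hG1 hG2 hG3 using hp
  refine ⟨F.biUnion G, ?_, ?_, ?_⟩
  · intro a ha
    rw [Finset.mem_biUnion] at ha
    obtain ⟨f, hf, ha⟩ := ha
    exact (Finset.mem_filter.1 (hG1 f hf ha)).1
  · calc ((F.biUnion G).card : ℝ) ≤ ((∑ f ∈ F, (G f).card : ℕ) : ℝ) := by
          exact_mod_cast Finset.card_biUnion_le
      _ = ∑ f ∈ F, ((G f).card : ℝ) := by push_cast; rfl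
      _ ≤ ∑ f ∈ F, 2 * Real.exp ((c * ρ) ^ 2 / 2) := Finset.sum_le_sum fun f hf => hG2 f hf
      _ = F.card * (2 * Real.exp ((c * ρ) ^ 2 / 2)) := by rw [Finset.sum_const, nsmul_eq_mul]
      _ ≤ _ := by gcongr
  · intro a ha
    obtain ⟨f, hf, hr⟩ := hF a ha
    obtain ⟨g, hg, k, hk, k', hk', he⟩ := hG3 f hf a (Finset.mem_filter.2 ⟨ha, hr⟩)
    exact ⟨g, Finset.mem_biUnion.2 ⟨f, hf, hg⟩, hR2 _ k hk k' hk' he⟩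

lemma two_exp_le (x : ℝ) : 2 * Real.exp x ≤ Real.exp (1 + x) := by
  rw [Real.exp_add]
  have := Real.add_one_le_exp (1 : ℝ)
  gcongr; linarith

/-- volumetric covering -/
lemma cov_vol (N : ℕ) (hN : 1 ≤ N) (T : Finset (EuclideanSpace ℝ (Fin N))) (hT : T.Nonempty)
    (ρ : ℝ) (hρ : 0 < ρ) (h : ∀ a ∈ T, ∀ b ∈ T, ‖a - b‖ ≤ ρ) (i : ℕ) :
    Cov T (Real.exp (193 * N * i)) (fun d => ‖d‖ ≤ ρ / 2 ^ i) := by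
  have hN' : (1 : ℝ) ≤ N := by exact_mod_cast hN
  induction i with
  | zero =>
    obtain ⟨a0, ha0⟩ := hT
    exact ⟨{a0}, by simpa using ha0, by simp, fun a ha => ⟨a0, by simp, by simpa using h a ha a0 ha0⟩⟩
  | succ i ih =>
    have hst := cov_step T _ _ (fun d => ‖d‖ ≤ ρ / 2 ^ (i + 1)) ih (ρ / 2 ^ i)
      (√(96 * N) / (ρ / 2 ^ (i + 1))) (by positivity) (fun a _ b _ h => h)
      {x | ‖x‖ ^ 2 ≤ 24 * N} (measurableSet_le (by fun_prop) measurable_const)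
      (fun x hx => by simpa using hx) (gam_L2 N hN) (by
        intro d k hk k' hk' he
        simp only [Set.mem_ofPred_eq] at hk hk'
        have h1 : ‖k - k'‖ ^ 2 ≤ 96 * N := by
          have : ‖k - k'‖ ≤ ‖k‖ + ‖k'‖ := norm_sub_le _ _
          have h0 := norm_nonneg (k - k')
          nlinarith [norm_nonneg k, norm_nonneg k', sq_nonneg (‖k‖ - ‖k'‖)]
        have h2 : ‖k - k'‖ ≤ √(96 * N) := Real.le_sqrt_of_sq_le h1
        rw [← he, norm_smul, Real.norm_of_nonneg (by positivity), div_mul_eq_mul_div,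
          div_le_iff₀ (by positivity)] at h2
        exact le_of_mul_le_mul_left h2 (by positivity))
    refine hst.mono ?_ (fun _ _ _ _ h => h)
    have e1 : (√(96 * N) / (ρ / 2 ^ (i + 1)) * (ρ / 2 ^ i)) ^ 2 / 2 = 192 * N := by
      have : √(96 * N) / (ρ / 2 ^ (i + 1)) * (ρ / 2 ^ i) = √(96 * N) * 2 := by
        rw [pow_succ]; field_simp
      rw [this, mul_pow, Real.sq_sqrt (by positivity)]; ring
    rw [e1]
    calc _ ≤ Real.exp (193 * N * i) * Real.exp (1 + 192 * N) := by
          gcongr; exact two_exp_le _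
      _ = Real.exp (193 * N * i + (1 + 192 * N)) := (Real.exp_add _ _).symm
      _ ≤ _ := by
          rw [Real.exp_le_exp]; push_cast; nlinarith

variable {Ω : Type*} [MeasurableSpace Ω] (μ : Measure Ω) [IsProbabilityMeasure μ]
  {N : ℕ} (u : Ω → EuclideanSpace ℝ (Fin N))

lemma int_bdd {g : Ω → ℝ} (hg : Measurable g) (C : ℝ) (h : ∀ y, |g y| ≤ C) : Integrable g μ :=
  Integrable.of_bound hg.aestronglyMeasurable C (Filter.Eventually.of_forall h)

lemma inner_bd (h : ℝ) (hu : ∀ y, ‖u y‖ ≤ h) (a : EuclideanSpace ℝ (Fin N)) (y : Ω) :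
    |inner ℝ (u y) a| ≤ h * ‖a‖ :=
  (abs_real_inner_le_norm _ _).trans (by gcongr; exact hu y)

/-- sup-norm bound from the `p`-norm -/
lemma sup_bd (hum : Measurable u) (h : ℝ) (hh : 1 ≤ h) (hu : ∀ y, ‖u y‖ ≤ h)
    (hiso : ∀ a, ‖a‖ ^ 2 = ∫ y, (inner ℝ (u y) a) ^ 2 ∂μ)
    (p : ℝ) (hp : 1 < p) (hp2 : p ≤ 2) (M D : ℝ) (hD : 0 < D) (hDM : D ^ p = M * h ^ 2)
    (d : EuclideanSpace ℝ (Fin N)) (hd : ∫ y, |inner ℝ (u y) d| ^ p ∂μ ≤ M) :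
    h * ‖d‖ ≤ D := by
  set s := h * ‖d‖ with hs
  by_cases hs0 : s = 0
  · rw [hs0]; exact hD.le
  have hs1 : 0 < s := lt_of_le_of_ne (by positivity) (Ne.symm hs0)
  have hb := inner_bd u h hu d
  have h1 : ‖d‖ ^ 2 ≤ s ^ (2 - p) * M := by
    rw [hiso]
    calc ∫ y, (inner ℝ (u y) d) ^ 2 ∂μ ≤ ∫ y, s ^ (2 - p) * |inner ℝ (u y) d| ^ p ∂μ := by
          apply integral_mono
          · refine int_bdd μ (by fun_prop) (s ^ 2) fun y => ?_
            rw [abs_pow]; gcongr; exact hb y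
          · refine int_bdd μ (by fun_prop) (s ^ (2 - p) * s ^ p) fun y => ?_
            rw [abs_mul, abs_of_nonneg (by positivity), abs_of_nonneg (by positivity)]
            gcongr; exact hb y
          · intro y
            dsimp only
            rw [← sq_abs, ← Real.rpow_natCast, show ((2 : ℕ) : ℝ) = (2 - p) + p by norm_num,
              Real.rpow_add' (abs_nonneg _) (by norm_num)]
            gcongr
            exact hb y
      _ = s ^ (2 - p) * ∫ y, |inner ℝ (u y) d| ^ p ∂μ := integral_const_mul _ _
      _ ≤ _ := by gcongr
  have h2 : s ^ p ≤ D ^ p := by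
    rw [hDM]
    have h3 : s ^ (2 - p) * s ^ p ≤ s ^ (2 - p) * (M * h ^ 2) := by
      rw [← Real.rpow_add hs1, sub_add_cancel, show (2 : ℝ) = ((2 : ℕ) : ℝ) by norm_num,
        Real.rpow_natCast]
      have : s ^ 2 = h ^ 2 * ‖d‖ ^ 2 := by rw [hs]; ring
      rw [this]
      have := mul_le_mul_of_nonneg_left h1 (sq_nonneg h)
      push_cast
      linarith
    exact le_of_mul_le_mul_left h3 (by positivity)
  exact (Real.rpow_le_rpow_iff hs1.le hD.le (by linarith)).1 h2

/-- The `L_{2k}` relation -/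
def R2k (k : ℕ) (σ : ℝ) (d : EuclideanSpace ℝ (Fin N)) : Prop :=
  ∫⁻ y, ENNReal.ofReal ((inner ℝ (u y) d) ^ (2 * k)) ∂μ ≤ ENNReal.ofReal (σ ^ (2 * k))

lemma l2_of_R2k (hum : Measurable u) (h : ℝ) (hh : 1 ≤ h) (hu : ∀ y, ‖u y‖ ≤ h)
    (hiso : ∀ a, ‖a‖ ^ 2 = ∫ y, (inner ℝ (u y) a) ^ 2 ∂μ)
    (p : ℝ) (hp : 1 < p) (hp2 : p ≤ 2) (M D : ℝ) (hM : 0 < M) (hD : 0 < D) (hDM : D ^ p = M * h ^ 2)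
    (k : ℕ) (hk : 1 ≤ k) (hk4 : h ^ 2 ≤ 4 ^ (2 * k - 2)) (j : ℕ)
    (d : EuclideanSpace ℝ (Fin N)) (hd : ∫ y, |inner ℝ (u y) d| ^ p ∂μ ≤ M)
    (hR : R2k μ u k (D / 2 ^ j) d) :
    h ^ 2 * ‖d‖ ^ 2 ≤ 5 * (D / 2 ^ j) ^ 2 * ((2 : ℝ) ^ p) ^ j := by
  set σ := D / 2 ^ j with hσ
  have hσ0 : 0 < σ := by positivity
  have hb := inner_bd u h hu d
  set f : Ω → ℝ := fun y => inner ℝ (u y) d with hf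
  have hfm : Measurable f := by fun_prop
  have hi2k : Integrable (fun y => f y ^ (2 * k)) μ := by
    refine int_bdd μ (by fun_prop) ((h * ‖d‖) ^ (2 * k)) fun y => ?_
    rw [abs_pow]; gcongr; exact hb y
  have hip : Integrable (fun y => |f y| ^ p) μ := by
    refine int_bdd μ (by fun_prop) ((h * ‖d‖) ^ p) fun y => ?_
    rw [abs_of_nonneg (by positivity)]; gcongr; exact hb y
  have h2k : ∫ y, f y ^ (2 * k) ∂μ ≤ σ ^ (2 * k) := by
    have hnn : 0 ≤ᵐ[μ] fun y => f y ^ (2 * k) :=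
      Filter.Eventually.of_forall fun y => by
        show 0 ≤ f y ^ (2 * k)
        rw [pow_mul]; positivity
    rw [integral_eq_lintegral_of_nonneg_ae hnn hi2k.1]
    exact ENNReal.toReal_le_of_le_ofReal (by positivity) hR
  have hpt : ∀ t : ℝ, t ^ 2 ≤ (4 * σ) ^ (2 - p) * |t| ^ p + ((4 * σ) ^ (2 * k - 2))⁻¹ * t ^ (2 * k) := by
    intro t
    have hA : 0 ≤ (4 * σ) ^ (2 - p) * |t| ^ p := by positivity
    have hB : 0 ≤ ((4 * σ) ^ (2 * k - 2))⁻¹ * t ^ (2 * k) := by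
      have : 0 ≤ t ^ (2 * k) := by rw [pow_mul]; positivity
      positivity
    rcases le_total |t| (4 * σ) with ht | ht
    · have : t ^ 2 ≤ (4 * σ) ^ (2 - p) * |t| ^ p := by
        rw [← sq_abs, ← Real.rpow_natCast, show ((2 : ℕ) : ℝ) = (2 - p) + p by norm_num,
              Real.rpow_add' (abs_nonneg _) (by norm_num)]
        gcongr
      linarith
    · have : t ^ 2 ≤ ((4 * σ) ^ (2 * k - 2))⁻¹ * t ^ (2 * k) := by
        rw [inv_mul_eq_div, le_div_iff₀ (by positivity)]
        have e : t ^ (2 * k) = t ^ 2 * |t| ^ (2 * k - 2) := by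
          have : 2 * k = 2 + 2 * (k - 1) := by omega
          have h' : 2 * k - 2 = 2 * (k - 1) := by omega
          rw [h', pow_mul |t|, sq_abs, ← pow_mul, ← pow_add, ← this]
        rw [e]
        gcongr
      linarith
  have h1 : ‖d‖ ^ 2 ≤ (4 * σ) ^ (2 - p) * M + ((4 * σ) ^ (2 * k - 2))⁻¹ * σ ^ (2 * k) := by
    rw [hiso]
    calc ∫ y, f y ^ 2 ∂μ ≤ ∫ y, ((4 * σ) ^ (2 - p) * |f y| ^ p +
          ((4 * σ) ^ (2 * k - 2))⁻¹ * f y ^ (2 * k)) ∂μ := by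
          apply integral_mono _ _ (fun y => hpt (f y))
          · refine int_bdd μ (by fun_prop) ((h * ‖d‖) ^ 2) fun y => ?_
            rw [abs_pow]; gcongr; exact hb y
          · exact (hip.const_mul _).add (hi2k.const_mul _)
      _ = (4 * σ) ^ (2 - p) * ∫ y, |f y| ^ p ∂μ +
          ((4 * σ) ^ (2 * k - 2))⁻¹ * ∫ y, f y ^ (2 * k) ∂μ := by
          rw [integral_add (hip.const_mul _) (hi2k.const_mul _), integral_const_mul,
            integral_const_mul]
      _ ≤ _ := by gcongr
  have hbj : (0 : ℝ) < ((2 : ℝ) ^ p) ^ j := by positivity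
  have hσp : σ ^ p * ((2 : ℝ) ^ p) ^ j = M * h ^ 2 := by
    rw [← hDM, hσ, Real.div_rpow hD.le (by positivity), ← Real.rpow_natCast ((2 : ℝ) ^ p) j,
      ← Real.rpow_natCast (2 : ℝ) j, ← Real.rpow_mul (by norm_num), ← Real.rpow_mul (by norm_num),
      mul_comm p]
    field_simp
  have hA : h ^ 2 * ((4 * σ) ^ (2 - p) * M) ≤ 4 * (σ ^ 2 * ((2 : ℝ) ^ p) ^ j) := by
    have e1 : (4 * σ) ^ (2 - p) ≤ 4 * σ ^ (2 - p) := by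
      rw [Real.mul_rpow (by norm_num) hσ0.le]
      gcongr
      calc (4 : ℝ) ^ (2 - p) ≤ 4 ^ (1 : ℝ) :=
            Real.rpow_le_rpow_of_exponent_le (by norm_num) (by linarith)
        _ = 4 := by norm_num
    have e2 : σ ^ 2 = σ ^ (2 - p) * σ ^ p := by
      rw [← Real.rpow_add hσ0, sub_add_cancel]; norm_num
    calc h ^ 2 * ((4 * σ) ^ (2 - p) * M) ≤ h ^ 2 * (4 * σ ^ (2 - p) * M) := by gcongr
      _ = 4 * (σ ^ (2 - p) * (M * h ^ 2)) := by ring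
      _ = _ := by rw [← hσp, e2]; ring
  have hB : h ^ 2 * (((4 * σ) ^ (2 * k - 2))⁻¹ * σ ^ (2 * k)) ≤ σ ^ 2 * ((2 : ℝ) ^ p) ^ j := by
    have e : σ ^ (2 * k) = σ ^ 2 * σ ^ (2 * k - 2) := by rw [← pow_add]; congr 1; omega
    have e2 : h ^ 2 * (((4 * σ) ^ (2 * k - 2))⁻¹ * σ ^ (2 * k)) = h ^ 2 / 4 ^ (2 * k - 2) * σ ^ 2 := by
      rw [e, mul_pow]; field_simp
    rw [e2]
    have e3 : h ^ 2 / 4 ^ (2 * k - 2) ≤ 1 := by rw [div_le_one (by positivity)]; exact hk4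
    have e4 : (1 : ℝ) ≤ ((2 : ℝ) ^ p) ^ j :=
      one_le_pow₀ (Real.one_le_rpow (by norm_num) (by linarith))
    nlinarith [sq_nonneg σ]
  have := mul_le_mul_of_nonneg_left h1 (sq_nonneg h)
  nlinarith


lemma cov_2k (hum : Measurable u) (h : ℝ) (hh : 1 ≤ h) (hu : ∀ y, ‖u y‖ ≤ h)
    (hiso : ∀ a, ‖a‖ ^ 2 = ∫ y, (inner ℝ (u y) a) ^ 2 ∂μ)
    (p : ℝ) (hp : 1 < p) (hp2 : p ≤ 2) (M D : ℝ) (hM : 0 < M) (hD : 0 < D) (hDM : D ^ p = M * h ^ 2)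
    (k : ℕ) (hk : 1 ≤ k) (hk4 : h ^ 2 ≤ 4 ^ (2 * k - 2))
    (T : Finset (EuclideanSpace ℝ (Fin N))) (hT : T.Nonempty)
    (hTM : ∀ a ∈ T, ∀ b ∈ T, ∫ y, |inner ℝ (u y) (a - b)| ^ p ∂μ ≤ M) (j : ℕ) :
    Cov T (Real.exp (961 * k * ((2 : ℝ) ^ p) ^ j)) (R2k μ u k (D / 2 ^ j)) := by
  have hk' : (1 : ℝ) ≤ k := by exact_mod_cast hk
  have hb2 : (2 : ℝ) ≤ 2 ^ p := by
    calc (2 : ℝ) = 2 ^ (1 : ℝ) := by norm_num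
      _ ≤ _ := Real.rpow_le_rpow_of_exponent_le (by norm_num) (by linarith)
  set b : ℝ := 2 ^ p with hb
  have hh0 : 0 < h := by linarith
  induction j with
  | zero =>
    obtain ⟨a0, ha0⟩ := hT
    refine ⟨{a0}, by simpa using ha0, ?_, fun a ha => ⟨a0, by simp, ?_⟩⟩
    · simp only [Finset.card_singleton, Nat.cast_one]
      apply Real.one_le_exp; positivity
    · have h1 := sup_bd μ u hum h hh hu hiso p hp hp2 M D hD hDM (a - a0) (hTM a ha a0 ha0)
      unfold R2k
      calc ∫⁻ y, ENNReal.ofReal ((inner ℝ (u y) (a - a0)) ^ (2 * k)) ∂μ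
          ≤ ∫⁻ y, ENNReal.ofReal ((D / 2 ^ 0) ^ (2 * k)) ∂μ := by
            apply lintegral_mono
            intro y
            apply ENNReal.ofReal_le_ofReal
            rw [pow_zero, div_one, ← (even_two_mul k).pow_abs]
            gcongr
            exact (inner_bd u h hu _ y).trans h1
        _ = _ := by simp
  | succ j ih =>
    set σ := D / 2 ^ (j + 1) with hσ
    have hσ0 : 0 < σ := by positivity
    obtain ⟨hKm, hKg⟩ := gam_L2k μ u hum h hh0 hu k hk
    set c := √(96 * k) * h / σ with hc
    have hc0 : 0 < c := by positivity
    set ρ := √(5 * (D / 2 ^ j) ^ 2 * b ^ j) / h with hρ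
    have hst := cov_step T _ _ (R2k μ u k σ) ih ρ c hc0.le (by
        intro a ha a' ha' hr
        have := l2_of_R2k μ u hum h hh hu hiso p hp hp2 M D hM hD hDM k hk hk4 j (a - a')
          (hTM a ha a' ha') hr
        rw [hρ, le_div_iff₀ hh0]
        apply Real.le_sqrt_of_sq_le
        rw [mul_pow]; linarith) _ hKm (by
        intro x hx
        simp only [Set.mem_ofPred_eq] at hx ⊢
        simpa only [inner_neg_right, (even_two_mul k).neg_pow] using hx) hKg (by
        intro d x hx x' hx' he
        simp only [Set.mem_ofPred_eq] at hx hx'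
        unfold R2k
        have hcp : (0 : ℝ) ≤ c ^ (2 * k) := by positivity
        have key : ENNReal.ofReal (c ^ (2 * k)) *
            ∫⁻ y, ENNReal.ofReal ((inner ℝ (u y) d) ^ (2 * k)) ∂μ ≤
            ENNReal.ofReal (c ^ (2 * k)) * ENNReal.ofReal (σ ^ (2 * k)) := by
          calc _ = ∫⁻ y, ENNReal.ofReal ((inner ℝ (u y) x - inner ℝ (u y) x') ^ (2 * k)) ∂μ := by
                rw [← lintegral_const_mul _ (by fun_prop)]
                refine lintegral_congr fun y => ?_
                rw [← ENNReal.ofReal_mul hcp, ← mul_pow, ← inner_sub_right, ← he, inner_smul_right]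
            _ ≤ ∫⁻ y, ENNReal.ofReal (2 ^ (2 * k - 1)) *
                  (ENNReal.ofReal ((inner ℝ (u y) x) ^ (2 * k)) +
                   ENNReal.ofReal ((inner ℝ (u y) x') ^ (2 * k))) ∂μ := by
                apply lintegral_mono
                intro y
                dsimp only
                have e1 : 0 ≤ (inner ℝ (u y) x : ℝ) ^ (2 * k) := (even_two_mul k).pow_nonneg _
                have e2 : 0 ≤ (inner ℝ (u y) x' : ℝ) ^ (2 * k) := (even_two_mul k).pow_nonneg _
                rw [← ENNReal.ofReal_add e1 e2, ← ENNReal.ofReal_mul (by positivity)]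
                apply ENNReal.ofReal_le_ofReal
                have := (even_two_mul k).add_pow_le (a := (inner ℝ (u y) x : ℝ))
                  (b := -(inner ℝ (u y) x' : ℝ))
                rwa [← sub_eq_add_neg, (even_two_mul k).neg_pow] at this
            _ = ENNReal.ofReal (2 ^ (2 * k - 1)) *
                  (∫⁻ y, ENNReal.ofReal ((inner ℝ (u y) x) ^ (2 * k)) ∂μ +
                   ∫⁻ y, ENNReal.ofReal ((inner ℝ (u y) x') ^ (2 * k)) ∂μ) := by
                rw [lintegral_const_mul _ (by fun_prop), lintegral_add_left (by fun_prop)]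
            _ ≤ ENNReal.ofReal (2 ^ (2 * k - 1)) * (ENNReal.ofReal ((24 * k * h ^ 2) ^ k) +
                  ENNReal.ofReal ((24 * k * h ^ 2) ^ k)) := by gcongr
            _ = _ := by
                rw [← ENNReal.ofReal_add (by positivity) (by positivity),
                  ← ENNReal.ofReal_mul (by positivity), ← ENNReal.ofReal_mul (by positivity)]
                congr 1
                have e1 : c ^ (2 * k) * σ ^ (2 * k) = (96 * k * h ^ 2) ^ k := by
                  rw [← mul_pow, pow_mul, hc, div_mul_cancel₀ _ hσ0.ne', mul_pow,
                    Real.sq_sqrt (by positivity)]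
                have e2 : (2 : ℝ) ^ (2 * k - 1) * 2 = 4 ^ k := by
                  rw [← pow_succ, show 2 * k - 1 + 1 = 2 * k by omega, pow_mul]; norm_num
                rw [e1, ← two_mul, ← mul_assoc, e2, ← mul_pow]; congr 1; ring
        have hne : ENNReal.ofReal (c ^ (2 * k)) ≠ 0 := by
          rw [Ne, ENNReal.ofReal_eq_zero, not_le]; positivity
        exact (ENNReal.mul_le_mul_iff_right hne ENNReal.ofReal_ne_top).1 key)
    refine hst.mono ?_ (fun _ _ _ _ h => h)
    have e1 : (c * ρ) ^ 2 / 2 = 960 * k * b ^ j := by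
      have hρ2 : ρ ^ 2 = 5 * (D / 2 ^ j) ^ 2 * b ^ j / h ^ 2 := by
        rw [hρ, div_pow, Real.sq_sqrt (by positivity)]
      rw [mul_pow, hρ2, hc, div_pow, mul_pow, Real.sq_sqrt (by positivity), hσ, pow_succ]
      field_simp; ring
    rw [e1]
    have hbj : 1 ≤ b ^ j := one_le_pow₀ (by linarith)
    have hkb : 1 ≤ k * b ^ j := by nlinarith
    calc _ ≤ Real.exp (961 * k * b ^ j) * Real.exp (1 + 960 * k * b ^ j) := by
          gcongr; exact two_exp_le _
      _ = Real.exp (961 * k * b ^ j + (1 + 960 * k * b ^ j)) := (Real.exp_add _ _).symm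
      _ ≤ _ := by
          rw [Real.exp_le_exp, pow_succ]
          nlinarith

lemma cov_main (hum : Measurable u) (h : ℝ) (hh : 1 ≤ h) (hu : ∀ y, ‖u y‖ ≤ h)
    (hiso : ∀ a, ‖a‖ ^ 2 = ∫ y, (inner ℝ (u y) a) ^ 2 ∂μ)
    (p : ℝ) (hp : 1 < p) (hp2 : p ≤ 2) (M D : ℝ) (hM : 0 < M) (hD : 0 < D) (hDM : D ^ p = M * h ^ 2)
    (k : ℕ) (hk : 1 ≤ k) (hk4 : h ^ 2 ≤ 4 ^ (2 * k - 2))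
    (T : Finset (EuclideanSpace ℝ (Fin N))) (hT : T.Nonempty)
    (hTM : ∀ a ∈ T, ∀ b ∈ T, ∫ y, |inner ℝ (u y) (a - b)| ^ p ∂μ ≤ M)
    (m : ℕ) (hm : 1 ≤ m) (r : ℕ) (hr : Real.log (4 * m) ≤ k * 4 ^ r) (x : Fin m → Ω) (i : ℕ) :
    Cov T (Real.exp (982 * k * ((2 : ℝ) ^ p) ^ (i + r)))
      (fun d => ∀ l, |inner ℝ (u (x l)) d| ≤ D / 2 ^ i) := by
  have hk' : (1 : ℝ) ≤ k := by exact_mod_cast hk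
  have hm' : (1 : ℝ) ≤ m := by exact_mod_cast hm
  have hb2 : (2 : ℝ) ≤ 2 ^ p := by
    calc (2 : ℝ) = 2 ^ (1 : ℝ) := by norm_num
      _ ≤ _ := Real.rpow_le_rpow_of_exponent_le (by norm_num) (by linarith)
  have hcov := cov_2k μ u hum h hh hu hiso p hp hp2 M D hM hD hDM k hk hk4 T hT hTM (i + r)
  set b : ℝ := 2 ^ p with hb
  have hh0 : 0 < h := by linarith
  have hlog : 0 < Real.log (4 * m) := Real.log_pos (by linarith)
  set τ := h * √(2 * Real.log (4 * m)) with hτ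
  have hτ0 : 0 < τ := by positivity
  set s := D / 2 ^ i with hs
  have hs0 : 0 < s := by positivity
  set c := 2 * τ / s with hc
  have hc0 : 0 < c := by positivity
  set ρ := √(5 * (D / 2 ^ (i + r)) ^ 2 * b ^ (i + r)) / h with hρ
  have hst := cov_step T _ _ (fun d => ∀ l, |inner ℝ (u (x l)) d| ≤ s) hcov ρ c hc0.le (by
      intro a ha a' ha' hr
      have := l2_of_R2k μ u hum h hh hu hiso p hp hp2 M D hM hD hDM k hk hk4 (i + r) (a - a')
        (hTM a ha a' ha') hr
      rw [hρ, le_div_iff₀ hh0]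
      apply Real.le_sqrt_of_sq_le
      rw [mul_pow]; linarith) {z | ∀ l, |inner ℝ (u (x l)) z| ≤ τ} (by
      rw [Set.ofPred_forall]
      refine MeasurableSet.iInter fun j => ?_
      exact measurableSet_le (by fun_prop) measurable_const) (by
      intro z hz
      simpa only [Set.mem_ofPred_eq, inner_neg_right, abs_neg] using hz)
      (gam_sup hm (fun l => u (x l)) h hh0 (fun l => hu _)) (by
      intro d z hz z' hz' he l
      have h1 : c * |inner ℝ (u (x l)) d| ≤ c * s := by
        rw [← abs_of_pos hc0, ← abs_mul, ← inner_smul_right, he, inner_sub_right, abs_of_pos hc0]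
        have e : c * s = 2 * τ := by rw [hc]; field_simp
        rw [e]
        have q1 := abs_le.1 (hz l)
        have q2 := abs_le.1 (hz' l)
        rw [abs_le]
        constructor <;> linarith [q1.1, q1.2, q2.1, q2.2]
      exact le_of_mul_le_mul_left h1 hc0)
  refine hst.mono ?_ (fun _ _ _ _ h => h)
  have hbj : 1 ≤ b ^ (i + r) := one_le_pow₀ (by linarith)
  have hkb : 1 ≤ k * b ^ (i + r) := by nlinarith
  have e1 : (c * ρ) ^ 2 / 2 = 20 * Real.log (4 * m) / 4 ^ r * b ^ (i + r) := by
    have e4 : (4 : ℝ) ^ r = (2 ^ r) ^ 2 := by rw [← pow_mul, mul_comm, pow_mul]; norm_num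
    have hρ2 : ρ ^ 2 = 5 * (D / 2 ^ (i + r)) ^ 2 * b ^ (i + r) / h ^ 2 := by
      rw [hρ, div_pow, Real.sq_sqrt (by positivity)]
    rw [mul_pow, hρ2, hc, div_pow, mul_pow, hτ, mul_pow, Real.sq_sqrt (by positivity), hs,
      pow_add 2, e4]
    field_simp; ring
  have e2 : 20 * Real.log (4 * m) / 4 ^ r * b ^ (i + r) ≤ 20 * k * b ^ (i + r) := by
    gcongr
    rw [div_le_iff₀ (by positivity)]; linarith
  rw [e1]
  calc _ ≤ Real.exp (961 * k * b ^ (i + r)) * Real.exp (1 + 20 * k * b ^ (i + r)) := by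
        gcongr; exact (two_exp_le _).trans (by gcongr)
    _ = Real.exp (961 * k * b ^ (i + r) + (1 + 20 * k * b ^ (i + r))) := (Real.exp_add _ _).symm
    _ ≤ _ := by
        rw [Real.exp_le_exp]
        nlinarith

end Cover

open MeasureTheory

section PhiFacts

/-- The standing hypotheses on `Φ`. -/
structure PhiH (Φ : ℝ → ℝ) (p a1 aP q : ℝ) : Prop where
  pre : IsPhiPrefun Φ
  hp : 1 < p
  hp2 : p ≤ 2
  ha1 : 1 ≤ a1
  hA1 : AIncP Φ 1 a1
  haP : 1 ≤ aP
  hAp : AIncP Φ p aP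
  hq : 1 ≤ q
  hdec : DecQ Φ q

variable {Φ : ℝ → ℝ} {p a1 aP q : ℝ}

lemma PhiH.pos (h : PhiH Φ p a1 aP q) {t : ℝ} (ht : 0 < t) : 0 < Φ t := by
  obtain ⟨T, hT1, hT2⟩ := ((h.pre.tendsto_atTop.eventually_gt_atTop 0).and
    (Filter.eventually_gt_atTop t)).exists
  have h1 := h.hdec t T ht hT2
  have h2 : 0 < Φ T / T ^ q := div_pos hT1 (Real.rpow_pos_of_pos (ht.trans hT2) _)
  have h3 : 0 < Φ t / t ^ q := h2.trans_le h1
  have h4 : 0 < t ^ q := Real.rpow_pos_of_pos ht _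
  exact (div_pos_iff_of_pos_right h4).1 h3

lemma PhiH.nn (h : PhiH Φ p a1 aP q) {t : ℝ} (ht : 0 ≤ t) : 0 ≤ Φ t := h.pre.nonneg t ht

lemma PhiH.mono (h : PhiH Φ p a1 aP q) {s t : ℝ} (hs : 0 ≤ s) (hst : s ≤ t) : Φ s ≤ Φ t :=
  h.pre.mono (Set.mem_Ici.2 hs) (Set.mem_Ici.2 (hs.trans hst)) hst

lemma PhiH.dec (h : PhiH Φ p a1 aP q) {s t : ℝ} (hs : 0 < s) (hst : s ≤ t) :
    Φ t ≤ Φ s * (t / s) ^ q := by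
  have ht := hs.trans_le hst
  rcases hst.eq_or_lt with rfl | hlt
  · rw [div_self hs.ne', Real.one_rpow, mul_one]
  have h1 := h.hdec s t hs hlt
  rw [div_le_iff₀ (Real.rpow_pos_of_pos ht _)] at h1
  rw [Real.div_rpow ht.le hs.le]
  calc _ ≤ _ := h1
    _ = _ := by ring

lemma ainc_aux {a r s t : ℝ} (ha : 1 ≤ a) (h : AIncP Φ r a) (hs : 0 < s) (hst : s ≤ t)
    (hn : 0 ≤ Φ s) : Φ s ≤ a * Φ t * (s / t) ^ r := by
  have ht := hs.trans_le hst
  rcases hst.eq_or_lt with rfl | hlt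
  · rw [div_self hs.ne', Real.one_rpow, mul_one]; nlinarith
  have h1 := h s t hs hlt
  rw [div_le_iff₀ (Real.rpow_pos_of_pos hs _)] at h1
  rw [Real.div_rpow hs.le ht.le]
  calc _ ≤ _ := h1
    _ = _ := by ring

lemma PhiH.incp (h : PhiH Φ p a1 aP q) {s t : ℝ} (hs : 0 ≤ s) (hst : s ≤ t) :
    Φ s ≤ aP * Φ t * (s / t) ^ p := by
  rcases hs.eq_or_lt with rfl | hs'
  · rw [h.pre.map_zero]
    have := h.nn (hs.trans hst); have := h.haP
    positivity
  exact ainc_aux h.haP h.hAp hs' hst (h.nn hs)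

lemma PhiH.inc1 (h : PhiH Φ p a1 aP q) {s t : ℝ} (hs : 0 ≤ s) (hst : s ≤ t) :
    Φ s ≤ a1 * Φ t * (s / t) := by
  rcases hs.eq_or_lt with rfl | hs'
  · rw [h.pre.map_zero]; simp
  have := ainc_aux h.ha1 h.hA1 hs' hst (h.nn hs)
  rwa [Real.rpow_one] at this

lemma PhiH.diff (h : PhiH Φ p a1 aP q) {v u : ℝ} (hv : 0 ≤ v) (hvu : v ≤ u) (hu : 0 < u) :
    Φ u - Φ v ≤ q * Φ u * ((u - v) / u) := by
  have hpu := h.pos hu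
  rcases hv.eq_or_lt with rfl | hv'
  · rw [h.pre.map_zero, sub_zero, sub_zero, div_self hu.ne']
    have := h.hq; nlinarith
  have h1 := h.dec hv' hvu
  have h2 : 1 + q * (v / u - 1) ≤ (1 + (v / u - 1)) ^ q :=
    one_add_mul_self_le_rpow_one_add (by have : 0 < v / u := by positivity
                                         linarith) h.hq
  have h3 : (1 + (v / u - 1)) = v / u := by ring
  rw [h3] at h2
  have h4 : (u / v) ^ q * (v / u) ^ q = 1 := by
    rw [← Real.mul_rpow (by positivity) (by positivity)]
    have : u / v * (v / u) = 1 := by field_simp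
    rw [this, Real.one_rpow]
  have h5 : Φ u * (v / u) ^ q ≤ Φ v := by
    calc Φ u * (v / u) ^ q ≤ Φ v * (u / v) ^ q * (v / u) ^ q := by gcongr
      _ = Φ v * ((u / v) ^ q * (v / u) ^ q) := by ring
      _ = Φ v := by rw [h4, mul_one]
  have h6 : Φ u * (1 + q * (v / u - 1)) ≤ Φ v := (mul_le_mul_of_nonneg_left h2 hpu.le).trans h5
  have h7 : (u - v) / u = 1 - v / u := by field_simp
  rw [h7]; nlinarith

lemma PhiH.lip (h : PhiH Φ p a1 aP q) {M s t : ℝ} (hM : 0 < M) (hs : |s| ≤ M) (ht : |t| ≤ M) :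
    |Φ (|s|) - Φ (|t|)| ≤ q * a1 * Φ M / M * |s - t| := by
  wlog hst : |t| ≤ |s| generalizing s t
  · rw [abs_sub_comm, abs_sub_comm s t]
    exact this ht hs (le_of_not_ge hst)
  have hq := h.hq
  have ha := h.ha1
  have hPM := h.nn hM.le
  rcases (abs_nonneg s).eq_or_lt with h0 | h0
  · have h1 : |t| = 0 := le_antisymm (h0 ▸ hst) (abs_nonneg t)
    rw [← h0, h1, sub_self, abs_zero]; positivity
  have h1 := h.diff (abs_nonneg t) hst h0
  have h2 := h.inc1 (abs_nonneg s) hs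
  have h3 := h.mono (abs_nonneg t) hst
  rw [abs_of_nonneg (by linarith)]
  have h4 : |s| - |t| ≤ |s - t| := abs_sub_abs_le_abs_sub s t
  calc _ ≤ _ := h1
    _ ≤ q * (a1 * Φ M * (|s| / M)) * (|s - t| / |s|) := by
        have : 0 ≤ Φ |s| := h.nn h0.le
        gcongr
    _ = _ := by field_simp

lemma PhiH.cont (h : PhiH Φ p a1 aP q) : Continuous fun t : ℝ => Φ |t| := by
  rw [continuous_iff_continuousAt]
  intro t
  have hM : 0 < |t| + 1 := by positivity
  apply tendsto_iff_dist_tendsto_zero.2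
  have h0 : Filter.Tendsto (fun s => q * a1 * Φ (|t| + 1) / (|t| + 1) * |s - t|) (nhds t) (nhds 0) := by
    have : Continuous fun s => q * a1 * Φ (|t| + 1) / (|t| + 1) * |s - t| := by fun_prop
    simpa using this.tendsto t
  refine squeeze_zero' (Filter.Eventually.of_forall fun s => dist_nonneg) ?_ h0
  filter_upwards [Metric.ball_mem_nhds t one_pos] with s hs
  rw [Real.dist_eq]
  rw [Metric.mem_ball, Real.dist_eq] at hs
  refine h.lip (s := s) (t := t) hM ?_ (by linarith)
  have := abs_sub_abs_le_abs_sub s t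
  linarith

lemma PhiH.sq (h : PhiH Φ p a1 aP q) {D s u v : ℝ} (hD : 0 < D) (hu : |u| ≤ D) (hv : |v| ≤ D)
    (hs : |u - v| ≤ s) :
    (Φ |u| - Φ |v|) ^ 2 ≤ q ^ 2 * aP * Φ D * (s / D) ^ p * (Φ |u| + Φ |v|) := by
  wlog huv : |v| ≤ |u| generalizing u v
  · have := this hv hu (by rwa [abs_sub_comm]) (le_of_not_ge huv)
    linarith
  have hs0 : 0 ≤ s := (abs_nonneg _).trans hs
  have hq := h.hq
  have ha := h.haP
  have hPM := h.nn hD.le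
  have hp := h.hp
  rcases (abs_nonneg u).eq_or_lt with h0 | h0
  · have h1 : |v| = 0 := le_antisymm (h0 ▸ huv) (abs_nonneg v)
    rw [← h0, h1, sub_self, h.pre.map_zero]; simp
  have hPu := h.nn h0.le
  have hPv := h.nn (abs_nonneg v)
  have h1 := h.diff (abs_nonneg v) huv h0
  have h2 := h.incp (abs_nonneg u) hu
  have h3 := h.mono (abs_nonneg v) huv
  set ρ := (|u| - |v|) / |u| with hρ
  have hρ0 : 0 ≤ ρ := div_nonneg (by linarith) h0.le
  have hρ1 : ρ ≤ 1 := by rw [hρ, div_le_one h0]; linarith [abs_nonneg v]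
  have h4 : ρ ^ 2 ≤ ρ ^ p := by
    rcases hρ0.eq_or_lt with e | e
    · rw [← e, Real.zero_rpow (by linarith)]; norm_num
    · rw [← Real.rpow_natCast]
      exact Real.rpow_le_rpow_of_exponent_ge e hρ1 (by exact_mod_cast h.hp2)
  have h5 : ρ * (|u| / D) ≤ s / D := by
    rw [hρ]
    have : |u| - |v| ≤ s := (abs_sub_abs_le_abs_sub u v).trans hs
    rw [div_mul_div_comm, mul_comm |u| D, mul_div_mul_right _ _ h0.ne']
    gcongr
  have h6 : ρ ^ p * (|u| / D) ^ p ≤ (s / D) ^ p := by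
    rw [← Real.mul_rpow hρ0 (by positivity)]
    exact Real.rpow_le_rpow (by positivity) h5 (by linarith)
  calc (Φ |u| - Φ |v|) ^ 2 ≤ (q * Φ |u| * ρ) ^ 2 := by
        apply pow_le_pow_left₀ (by linarith) h1
    _ = q ^ 2 * Φ |u| * Φ |u| * ρ ^ 2 := by ring
    _ ≤ q ^ 2 * Φ |u| * (aP * Φ D * (|u| / D) ^ p) * ρ ^ p := by gcongr
    _ = q ^ 2 * Φ |u| * (aP * Φ D) * (ρ ^ p * (|u| / D) ^ p) := by ring
    _ ≤ q ^ 2 * Φ |u| * (aP * Φ D) * (s / D) ^ p := by gcongr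
    _ = q ^ 2 * aP * Φ D * (s / D) ^ p * Φ |u| := by ring
    _ ≤ _ := by gcongr; linarith

lemma PhiH.pow_le (h : PhiH Φ p a1 aP q) {t : ℝ} (ht : 0 ≤ t) :
    t ^ p ≤ 1 + aP / Φ 1 * Φ t := by
  have h1 := h.pos one_pos
  have ha := h.haP
  have hp := h.hp
  have hPt := h.nn ht
  rcases le_total t 1 with h2 | h2
  · have : t ^ p ≤ 1 := Real.rpow_le_one ht h2 (by linarith)
    have : 0 ≤ aP / Φ 1 * Φ t := by positivity
    linarith
  · have h3 := h.incp zero_le_one h2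
    have ht' : 0 < t := by linarith
    rw [Real.div_rpow zero_le_one ht, Real.one_rpow, mul_one_div, le_div_iff₀ (by positivity)] at h3
    have : t ^ p ≤ aP / Φ 1 * Φ t := by
      rw [div_mul_eq_mul_div, le_div_iff₀ h1]; linarith
    linarith

lemma rpow_sub_le (hp : 1 < p) (hp2 : p ≤ 2) (s t : ℝ) :
    |s - t| ^ p ≤ 4 * (|s| ^ p + |t| ^ p) := by
  have key : ∀ s t : ℝ, |t| ≤ |s| → |s - t| ^ p ≤ 4 * |s| ^ p := by
    intro s t h
    have h1 : |s - t| ≤ 2 * |s| := by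
      rw [abs_le]
      have := neg_abs_le s; have := le_abs_self s
      have := neg_abs_le t; have := le_abs_self t
      constructor <;> linarith
    calc |s - t| ^ p ≤ (2 * |s|) ^ p := Real.rpow_le_rpow (abs_nonneg _) h1 (by linarith)
      _ = 2 ^ p * |s| ^ p := Real.mul_rpow (by norm_num) (abs_nonneg _)
      _ ≤ _ := by
        gcongr
        calc (2 : ℝ) ^ p ≤ 2 ^ (2 : ℝ) := Real.rpow_le_rpow_of_exponent_le (by norm_num) hp2
          _ = 4 := by norm_num
  have hs : 0 ≤ |s| ^ p := by positivity
  have ht : 0 ≤ |t| ^ p := by positivity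
  rcases le_total |t| |s| with h | h
  · linarith [key s t h]
  · have := key t s h
    rw [abs_sub_comm] at this
    linarith

end PhiFacts

open MeasureTheory

section Lux
variable {Φ : ℝ → ℝ} {p a1 aP q : ℝ}

lemma lux_red (h : PhiH Φ p a1 aP q) {Ω : Type*} [TopologicalSpace Ω] [CompactSpace Ω]
    [MeasurableSpace Ω] [BorelSpace Ω] (μ : Measure Ω) [IsProbabilityMeasure μ]
    {m : ℕ} (x : Fin m → Ω) (hm : 1 ≤ m) (f : Ω → ℝ) (hf : Continuous f)
    (ε : ℝ) (hε : 0 < ε) (hε2 : ε ≤ 1 / 2)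
    (hdev : ∀ c : ℝ, ∫ y, Φ |c * f y| ∂μ ≤ 1 →
      |(∑ j, Φ |c * f (x j)|) / (m : ℝ) - ∫ y, Φ |c * f y| ∂μ| ≤ ε) :
    a1⁻¹ * (1 - ε) * luxNorm μ Φ f ≤ discLuxNorm Φ x f ∧
      discLuxNorm Φ x f ≤ a1 * (1 + ε) * luxNorm μ Φ f := by
  have ha1 := h.ha1
  have hq := h.hq
  have hm' : (0 : ℝ) < m := by exact_mod_cast hm
  have hconv : ∀ lam : ℝ, 0 < lam → ∀ y, |f y| / lam = |lam⁻¹ * f y| := by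
    intro lam hl y
    rw [abs_mul, abs_of_pos (inv_pos.2 hl), inv_mul_eq_div]
  have hIntg : ∀ lam : ℝ, 0 < lam → Integrable (fun y => Φ (|f y| / lam)) μ := by
    intro lam hl
    have : Continuous fun y => Φ (|f y| / lam) := by
      simp_rw [hconv lam hl]
      exact h.cont.comp (by fun_prop)
    exact this.integrable_of_hasCompactSupport (HasCompactSupport.of_compactSpace _)
  have hdev' : ∀ lam : ℝ, 0 < lam → ∫ y, Φ (|f y| / lam) ∂μ ≤ 1 →
      |(∑ j, Φ (|f (x j)| / lam)) / (m : ℝ) - ∫ y, Φ (|f y| / lam) ∂μ| ≤ ε := by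
    intro lam hl h1
    simp_rw [hconv lam hl] at h1 ⊢
    exact hdev _ h1
  unfold luxNorm discLuxNorm
  set S := {lam : ℝ | 0 < lam ∧ ∫ y, Φ (|f y| / lam) ∂μ ≤ 1} with hS
  set Sd := {lam : ℝ | 0 < lam ∧ (∑ j, Φ (|f (x j)| / lam)) / (m : ℝ) ≤ 1} with hSd
  have hSb : BddBelow S := ⟨0, fun t ht => ht.1.le⟩
  have hSdb : BddBelow Sd := ⟨0, fun t ht => ht.1.le⟩
  have hSne : S.Nonempty := by
    obtain ⟨B, hB⟩ : ∃ B, ∀ y, |f y| ≤ B := by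
      obtain ⟨B, hB⟩ := (isCompact_range hf).isBounded.exists_norm_le
      exact ⟨B, fun y => hB _ ⟨y, rfl⟩⟩
    have e1 := h.pre.tendsto_zero.eventually (Iio_mem_nhds (zero_lt_one' ℝ))
    obtain ⟨t, ht1, ht0⟩ := (e1.and self_mem_nhdsWithin).exists
    have ht0' : 0 < t := ht0
    have hB1 : 0 < |B| + 1 := by positivity
    refine ⟨(|B| + 1) / t, by positivity, ?_⟩
    calc ∫ y, Φ (|f y| / ((|B| + 1) / t)) ∂μ ≤ ∫ _, (1 : ℝ) ∂μ := by
          apply integral_mono (hIntg _ (by positivity)) (integrable_const _)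
          intro y
          refine le_trans (h.mono (t := t) (by positivity) ?_) (le_of_lt ht1)
          rw [div_le_iff₀ (by positivity), mul_div_cancel₀ _ ht0'.ne']
          exact (hB y).trans ((le_abs_self B).trans (by linarith))
      _ = 1 := by simp
  have hSup : ∀ l ∈ S, ∀ l', l ≤ l' → l' ∈ S := by
    intro l hl l' hll
    have hl0 := hl.1
    refine ⟨hl.1.trans_le hll, le_trans ?_ hl.2⟩
    apply integral_mono (hIntg _ (hl.1.trans_le hll)) (hIntg _ hl.1)
    intro y
    refine h.mono (div_nonneg (abs_nonneg _) (hl.1.trans_le hll).le) ?_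
    gcongr
  have hup : ∀ l ∈ S, l * (a1 * (1 + ε)) ∈ Sd := by
    intro l hl
    have hl0 := hl.1
    have hκ : 1 ≤ a1 * (1 + ε) := by nlinarith
    refine ⟨by positivity, ?_⟩
    have h1 := (abs_le.1 (hdev' l hl.1 hl.2)).2
    have h2 : (∑ j, Φ (|f (x j)| / l)) / (m : ℝ) ≤ 1 + ε := by linarith [hl.2]
    have h3 : ∀ j, Φ (|f (x j)| / (l * (a1 * (1 + ε)))) ≤ Φ (|f (x j)| / l) / (1 + ε) := by
      intro j
      rcases (abs_nonneg (f (x j))).eq_or_lt with e | e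
      · rw [← e]; simp [h.pre.map_zero]
      have := h.inc1 (s := |f (x j)| / (l * (a1 * (1 + ε)))) (t := |f (x j)| / l) (by positivity)
        (by gcongr; nlinarith)
      refine this.trans (le_of_eq ?_)
      field_simp
    calc (∑ j, Φ (|f (x j)| / (l * (a1 * (1 + ε))))) / (m : ℝ)
        ≤ (∑ j, Φ (|f (x j)| / l) / (1 + ε)) / m := by
          gcongr; exact h3 _
      _ = ((∑ j, Φ (|f (x j)| / l)) / m) / (1 + ε) := by rw [← Finset.sum_div]; ring
      _ ≤ (1 + ε) / (1 + ε) := by gcongr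
      _ = 1 := div_self (by positivity)
  have hl0 : 0 ≤ sInf S := le_csInf hSne fun t ht => ht.1.le
  constructor
  · obtain ⟨l, hl⟩ := hSne
    apply le_csInf ⟨_, hup l hl⟩
    intro τ hτ
    set l0 := sInf S with hl0d
    have hτ0 := hτ.1
    rcases le_or_gt l0 τ with hle | hlt
    · have hi : a1⁻¹ ≤ 1 := inv_le_one_of_one_le₀ ha1
      have hi0 : 0 < a1⁻¹ := by positivity
      have : a1⁻¹ * (1 - ε) ≤ 1 := by nlinarith
      nlinarith
    have hl0p : 0 < l0 := hτ0.trans hlt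
    have key : ∀ r : ℝ, 0 < r → r < 1 → l0 * ((r ^ 2) ^ q - ε) ≤ a1 * τ * r := by
      intro r hr hr1
      have hL : l0 / r ∈ S := by
        have : l0 < l0 / r := by rw [lt_div_iff₀ hr]; nlinarith
        obtain ⟨l1, hl1, hl1'⟩ := exists_lt_of_csInf_lt ⟨l, hl⟩ this
        exact hSup l1 hl1 _ hl1'.le
      have hR : l0 * r ∉ S := by
        intro hc
        have := csInf_le hSb hc
        nlinarith
      have hR' : 1 < ∫ y, Φ (|f y| / (l0 * r)) ∂μ := by
        by_contra hc
        exact hR ⟨by positivity, not_lt.1 hc⟩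
      have hd : ∀ y, Φ (|f y| / (l0 * r)) ≤ (1 / (r ^ 2) ^ q) * Φ (|f y| / (l0 / r)) := by
        intro y
        rcases (abs_nonneg (f y)).eq_or_lt with e | e
        · rw [← e]; simp [h.pre.map_zero]
        have := h.dec (s := |f y| / (l0 / r)) (t := |f y| / (l0 * r)) (by positivity)
          (by gcongr; rw [le_div_iff₀ hr]; nlinarith [mul_lt_mul_of_pos_left hr1 hl0p])
        have e2 : |f y| / (l0 * r) / (|f y| / (l0 / r)) = 1 / r ^ 2 := by field_simp
        rw [e2, Real.div_rpow zero_le_one (by positivity), Real.one_rpow] at this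
        linarith
      have h1 : 1 < (1 / (r ^ 2) ^ q) * ∫ y, Φ (|f y| / (l0 / r)) ∂μ := by
        refine hR'.trans_le ?_
        rw [← integral_const_mul]
        exact integral_mono (hIntg _ (by positivity)) ((hIntg _ hL.1).const_mul _) hd
      have hrq : 0 < (r ^ 2) ^ q := by positivity
      have h2 : (r ^ 2) ^ q < ∫ y, Φ (|f y| / (l0 / r)) ∂μ := by
        rw [one_div, inv_mul_eq_div, lt_div_iff₀ hrq] at h1
        linarith
      have h3 := (abs_le.1 (hdev' _ hL.1 hL.2)).1
      have hτl : τ ≤ l0 / r := by rw [le_div_iff₀ hr]; nlinarith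
      have h4 : (∑ j, Φ (|f (x j)| / (l0 / r))) / (m : ℝ) ≤ a1 * τ * r / l0 := by
        have h5 : ∀ j, Φ (|f (x j)| / (l0 / r)) ≤ a1 * τ * r / l0 * Φ (|f (x j)| / τ) := by
          intro j
          rcases (abs_nonneg (f (x j))).eq_or_lt with e | e
          · rw [← e]; simp [h.pre.map_zero]
          have := h.inc1 (s := |f (x j)| / (l0 / r)) (t := |f (x j)| / τ) (by positivity)
            (by gcongr)
          refine this.trans (le_of_eq ?_)
          field_simp
        calc (∑ j, Φ (|f (x j)| / (l0 / r))) / (m : ℝ)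
            ≤ (∑ j, a1 * τ * r / l0 * Φ (|f (x j)| / τ)) / m := by gcongr; exact h5 _
          _ = a1 * τ * r / l0 * ((∑ j, Φ (|f (x j)| / τ)) / m) := by
              rw [← Finset.mul_sum]; ring
          _ ≤ a1 * τ * r / l0 * 1 := by gcongr; exact hτ.2
          _ = _ := mul_one _
      have h6 : (r ^ 2) ^ q - ε ≤ a1 * τ * r / l0 := by linarith
      rw [le_div_iff₀ hl0p] at h6
      linarith
    have hlim : l0 * (1 - ε) ≤ a1 * τ := by
      have hc1 : ContinuousAt (fun r : ℝ => l0 * ((r ^ 2) ^ q - ε)) 1 := by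
        have : ContinuousAt (fun r : ℝ => (r ^ 2) ^ q) 1 :=
          ContinuousAt.rpow_const (by fun_prop) (Or.inr (by linarith))
        fun_prop
      have hc2 : ContinuousAt (fun r : ℝ => a1 * τ * r) 1 := by fun_prop
      have t1 : Filter.Tendsto (fun r : ℝ => l0 * ((r ^ 2) ^ q - ε)) (nhdsWithin 1 (Set.Iio 1))
          (nhds (l0 * (1 - ε))) := by
        have := hc1.tendsto.mono_left (nhdsWithin_le_nhds (s := Set.Iio 1))
        simpa using this
      have t2 : Filter.Tendsto (fun r : ℝ => a1 * τ * r) (nhdsWithin 1 (Set.Iio 1))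
          (nhds (a1 * τ)) := by
        have := hc2.tendsto.mono_left (nhdsWithin_le_nhds (s := Set.Iio 1))
        simpa using this
      refine le_of_tendsto_of_tendsto t1 t2 ?_
      filter_upwards [Ioo_mem_nhdsLT (zero_lt_one' ℝ)] with r hr
      exact key r hr.1 hr.2
    rw [mul_assoc, inv_mul_le_iff₀ (by positivity)]
    linarith
  · rw [mul_comm]
    rw [← div_le_iff₀ (by positivity)]
    apply le_csInf hSne
    intro l hl
    rw [div_le_iff₀ (by positivity)]
    exact csInf_le hSdb (hup l hl)

end Lux

open MeasureTheory

section Chain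

/-- sign of a boolean -/
def sgn (b : Bool) : ℝ := if b then 1 else -1

/-- signed sum -/
def sx {m : ℕ} (s : Fin m → Bool) (v : Fin m → ℝ) : ℝ := ∑ j, sgn (s j) * v j

/-- average over sign vectors -/
noncomputable def avg {m : ℕ} (g : (Fin m → Bool) → ℝ) : ℝ := (∑ s, g s) / 2 ^ m

lemma avg_mono {m : ℕ} {g g' : (Fin m → Bool) → ℝ} (h : ∀ s, g s ≤ g' s) : avg g ≤ avg g' := by
  unfold avg
  gcongr
  exact h _

lemma avg_add {m : ℕ} (g g' : (Fin m → Bool) → ℝ) : avg (fun s => g s + g' s) = avg g + avg g' := by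
  unfold avg
  rw [Finset.sum_add_distrib, add_div]

lemma avg_const {m : ℕ} (c : ℝ) : avg (fun _ : Fin m → Bool => c) = c := by
  unfold avg
  simp

lemma avg_const_mul {m : ℕ} (c : ℝ) (g : (Fin m → Bool) → ℝ) :
    avg (fun s => c * g s) = c * avg g := by
  unfold avg
  rw [← Finset.mul_sum, mul_div_assoc]

lemma avg_sum {m : ℕ} {ι : Type*} (F : Finset ι) (g : ι → (Fin m → Bool) → ℝ) :
    avg (fun s => ∑ i ∈ F, g i s) = ∑ i ∈ F, avg (g i) := by
  unfold avg
  rw [Finset.sum_comm, Finset.sum_div]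

lemma avg_mgf {m : ℕ} (v : Fin m → ℝ) (θ : ℝ) :
    avg (fun s => Real.exp (θ * sx s v)) ≤ Real.exp (θ ^ 2 * (∑ j, v j ^ 2) / 2) := by
  have h1 : ∑ s : Fin m → Bool, Real.exp (θ * sx s v)
      = ∏ j, ∑ b : Bool, Real.exp (θ * (sgn b * v j)) := by
    rw [Finset.prod_univ_sum, Fintype.piFinset_univ]
    refine Finset.sum_congr rfl fun s _ => ?_
    rw [← Real.exp_sum, sx, Finset.mul_sum]
  have h2 : ∀ j, ∑ b : Bool, Real.exp (θ * (sgn b * v j)) ≤ 2 * Real.exp ((θ * v j) ^ 2 / 2) := by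
    intro j
    have := Real.cosh_le_exp_half_sq (θ * v j)
    rw [Real.cosh_eq] at this
    rw [Fintype.sum_bool]
    simp only [sgn, if_true, one_mul]
    have e : θ * ((if false = true then (1 : ℝ) else -1) * v j) = -(θ * v j) := by simp
    rw [e]
    linarith
  unfold avg
  rw [h1, div_le_iff₀ (by positivity)]
  calc ∏ j, ∑ b : Bool, Real.exp (θ * (sgn b * v j))
      ≤ ∏ j, 2 * Real.exp ((θ * v j) ^ 2 / 2) := by
        apply Finset.prod_le_prod
        · intro j _; positivity
        · intro j _; exact h2 j
    _ = _ := by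
        rw [Finset.prod_mul_distrib, ← Real.exp_sum]
        simp only [Finset.prod_const, Finset.card_univ, Fintype.card_fin]
        rw [mul_comm, ← Finset.sum_div]
        congr 3
        rw [Finset.mul_sum]
        exact Finset.sum_congr rfl fun j _ => by ring

lemma avg_max {m : ℕ} {κ : Type*} (G : Finset κ) (w : κ → Fin m → ℝ) (σ : ℝ) (hσ : 0 < σ)
    (hw : ∀ g ∈ G, ∑ j, w g j ^ 2 ≤ σ ^ 2) (E : ℝ) (hE : 1 ≤ E) (hG : (G.card : ℝ) ≤ Real.exp E)
    (Y : (Fin m → Bool) → ℝ) (hY : ∀ s, ∃ g ∈ G, Y s ≤ |sx s (w g)|) :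
    avg Y ≤ 3 * σ * √E := by
  set θ := √E / σ with hθ
  have hE0 : 0 < √E := Real.sqrt_pos.2 (by linarith)
  have hθ0 : 0 < θ := by positivity
  have h1 : ∀ s, Real.exp (θ * Y s) ≤
      ∑ g ∈ G, (Real.exp (θ * sx s (w g)) + Real.exp (-θ * sx s (w g))) := by
    intro s
    obtain ⟨g, hg, hYg⟩ := hY s
    calc Real.exp (θ * Y s) ≤ Real.exp (θ * |sx s (w g)|) := by gcongr
      _ ≤ Real.exp (θ * sx s (w g)) + Real.exp (-θ * sx s (w g)) := by
        rcases abs_choice (sx s (w g)) with e | e <;> rw [e]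
        · linarith [Real.exp_pos (-θ * sx s (w g))]
        · rw [mul_neg, ← neg_mul]; linarith [Real.exp_pos (θ * sx s (w g))]
      _ ≤ _ := Finset.single_le_sum (f := fun g => Real.exp (θ * sx s (w g)) + Real.exp (-θ * sx s (w g)))
          (fun g _ => by positivity) hg
  have h2 : avg (fun s => Real.exp (θ * Y s)) ≤ Real.exp (E + 1 + E / 2) := by
    calc _ ≤ _ := avg_mono h1
      _ = ∑ g ∈ G, (avg (fun s => Real.exp (θ * sx s (w g))) + avg (fun s => Real.exp (-θ * sx s (w g)))) := by
        rw [avg_sum]; simp_rw [avg_add]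
      _ ≤ ∑ g ∈ G, 2 * Real.exp (E / 2) := by
        apply Finset.sum_le_sum
        intro g hg
        have hb : θ ^ 2 * (∑ j, w g j ^ 2) / 2 ≤ E / 2 := by
          have : θ ^ 2 * σ ^ 2 = E := by
            rw [hθ, div_pow, Real.sq_sqrt (by linarith)]; field_simp
          have := mul_le_mul_of_nonneg_left (hw g hg) (sq_nonneg θ)
          linarith
        have b1 := avg_mgf (w g) θ
        have b2 := avg_mgf (w g) (-θ)
        rw [neg_sq] at b2
        have b3 := Real.exp_le_exp.2 hb
        linarith
      _ = G.card * (2 * Real.exp (E / 2)) := by rw [Finset.sum_const, nsmul_eq_mul]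
      _ ≤ Real.exp E * (Real.exp 1 * Real.exp (E / 2)) := by
        gcongr
        have := Real.add_one_le_exp (1 : ℝ); linarith
      _ = _ := by rw [Real.exp_add, Real.exp_add]; ring
  have h3 : θ * avg Y ≤ E + 1 + E / 2 := by
    set c := E + 1 + E / 2 with hc
    have : avg (fun s => Real.exp c * (1 + (θ * Y s - c))) ≤ Real.exp c := by
      refine le_trans (avg_mono fun s => ?_) h2
      have := Real.add_one_le_exp (θ * Y s - c)
      calc _ ≤ Real.exp c * Real.exp (θ * Y s - c) := by gcongr; linarith
        _ = _ := by rw [← Real.exp_add]; congr 1; ring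
    have e : avg (fun s => Real.exp c * (1 + (θ * Y s - c))) = Real.exp c * (1 + (θ * avg Y - c)) := by
      rw [avg_const_mul]
      congr 1
      have : (fun s : Fin m → Bool => 1 + (θ * Y s - c)) = fun s => θ * Y s + (1 - c) := by
        funext s; ring
      rw [this, avg_add, avg_const_mul, avg_const]; ring
    rw [e] at this
    have h5 : 1 + (θ * avg Y - c) ≤ 1 := by
      have hpos := Real.exp_pos c
      by_contra hcon
      push Not at hcon
      nlinarith
    linarith
  have h4 : E + 1 + E / 2 ≤ (5 / 2) * E := by linarith
  have h5 : θ * avg Y ≤ θ * (3 * σ * √E) := by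
    have : θ * (3 * σ * √E) = 3 * E := by
      rw [hθ]
      have := Real.mul_self_sqrt (show 0 ≤ E by linarith)
      field_simp
      rw [sq, this]
    rw [this]; linarith
  exact le_of_mul_le_mul_left h5 hθ0

lemma sx_sub {m : ℕ} (s : Fin m → Bool) (v w : Fin m → ℝ) :
    sx s (fun j => v j - w j) = sx s v - sx s w := by
  unfold sx
  rw [← Finset.sum_sub_distrib]
  exact Finset.sum_congr rfl fun j _ => by ring

lemma sx_cs {m : ℕ} (s : Fin m → Bool) (v : Fin m → ℝ) (τ : ℝ) (hτ : 0 ≤ τ)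
    (h : ∑ j, v j ^ 2 ≤ τ ^ 2) : |sx s v| ≤ √m * τ := by
  apply abs_le_of_sq_le_sq _ (by positivity)
  rw [mul_pow, Real.sq_sqrt (by positivity)]
  unfold sx
  calc (∑ j, sgn (s j) * v j) ^ 2 ≤ (∑ j, sgn (s j) ^ 2) * ∑ j, v j ^ 2 :=
        Finset.sum_mul_sq_le_sq_mul_sq _ _ _
    _ = m * ∑ j, v j ^ 2 := by
        congr 1
        have : ∀ b, sgn b ^ 2 = 1 := by intro b; cases b <;> simp [sgn]
        simp [this]
    _ ≤ _ := by gcongr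

lemma sqrt_add_le' (a b : ℝ) (ha : 0 ≤ a) (hb : 0 ≤ b) : √(a + b) ≤ √a + √b := by
  rw [Real.sqrt_le_iff]
  refine ⟨by positivity, ?_⟩
  have := Real.sq_sqrt ha
  have := Real.sq_sqrt hb
  have : 0 ≤ √a * √b := by positivity
  nlinarith

open Classical in
lemma chain {m : ℕ} {ι : Type*} (T : Finset ι) (V : ι → Fin m → ℝ) (I : ℕ) (E τ : ℕ → ℝ)
    (hE : ∀ i, 1 ≤ E i) (hτ : ∀ i, 0 < τ i) (hτm : ∀ i, τ (i + 1) ≤ τ i)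
    (hV : ∀ a ∈ T, ∑ j, V a j ^ 2 ≤ τ 0 ^ 2)
    (hcov : ∀ i, ∃ F ⊆ T, (F.card : ℝ) ≤ Real.exp (E i) ∧
      ∀ a ∈ T, ∃ f ∈ F, ∑ j, (V a j - V f j) ^ 2 ≤ τ i ^ 2)
    (Y : (Fin m → Bool) → ℝ) (hY : ∀ s, ∃ a ∈ T, Y s ≤ |sx s (V a)|) :
    avg Y ≤ 3 * τ 0 * √(E 0) + ∑ i ∈ Finset.range I, 6 * τ i * (√(E i) + √(E (i + 1)))
      + √m * τ I := by
  choose F hFT hFc hF using hcov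
  choose A hAT hAY using hY
  choose! π hπF hπ using hF
  have hpt : ∀ s, Y s ≤ |sx s (V (π 0 (A s)))| +
      (∑ i ∈ Finset.range I, |sx s (fun j => V (π (i + 1) (A s)) j - V (π i (A s)) j)|) + √m * τ I := by
    intro s
    have e1 : sx s (V (A s)) = sx s (V (π 0 (A s))) +
        (∑ i ∈ Finset.range I, sx s (fun j => V (π (i + 1) (A s)) j - V (π i (A s)) j)) +
        sx s (fun j => V (A s) j - V (π I (A s)) j) := by
      simp_rw [sx_sub]
      rw [Finset.sum_range_sub (fun i => sx s (V (π i (A s))))]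
      ring
    refine (hAY s).trans ?_
    rw [e1]
    have := sx_cs s (fun j => V (A s) j - V (π I (A s)) j) (τ I) (hτ I).le (hπ I _ (hAT s))
    refine (abs_add_le _ _).trans (add_le_add ((abs_add_le _ _).trans ?_) this)
    gcongr
    exact Finset.abs_sum_le_sum_abs _ _
  refine (avg_mono hpt).trans ?_
  rw [avg_add, avg_add, avg_const, avg_sum]
  gcongr with i hi
  · refine avg_max (F 0) V (τ 0) (hτ 0) (fun g hg => hV g (hFT 0 hg)) (E 0) (hE 0) (hFc 0) _ ?_
    intro s
    exact ⟨π 0 (A s), hπF 0 _ (hAT s), le_rfl⟩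
  · have hb := avg_max (((F (i + 1)) ×ˢ (F i)).filter
        (fun g => ∑ j, (V g.1 j - V g.2 j) ^ 2 ≤ (2 * τ i) ^ 2))
      (fun g j => V g.1 j - V g.2 j) (2 * τ i) (by have := hτ i; positivity)
      (fun g hg => (Finset.mem_filter.1 hg).2) (E i + E (i + 1)) (by linarith [hE i, hE (i + 1)])
      (by
        calc _ ≤ (((F (i + 1)) ×ˢ (F i)).card : ℝ) := by exact_mod_cast Finset.card_filter_le _ _
          _ = ((F (i + 1)).card : ℝ) * (F i).card := by rw [Finset.card_product]; push_cast; rfl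
          _ ≤ Real.exp (E (i + 1)) * Real.exp (E i) := by gcongr <;> exact hFc _
          _ = _ := by rw [← Real.exp_add, add_comm])
      (fun s => |sx s (fun j => V (π (i + 1) (A s)) j - V (π i (A s)) j)|)
      (by
        intro s
        refine ⟨(π (i + 1) (A s), π i (A s)), ?_, le_rfl⟩
        rw [Finset.mem_filter, Finset.mem_product]
        refine ⟨⟨hπF _ _ (hAT s), hπF _ _ (hAT s)⟩, ?_⟩
        dsimp only
        have b1 := hπ i _ (hAT s)
        have b2 := hπ (i + 1) _ (hAT s)
        have b3 : τ (i + 1) ^ 2 ≤ τ i ^ 2 := pow_le_pow_left₀ (hτ _).le (hτm i) 2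
        calc ∑ j, (V (π (i + 1) (A s)) j - V (π i (A s)) j) ^ 2
            ≤ ∑ j, (2 * (V (A s) j - V (π i (A s)) j) ^ 2 + 2 * (V (A s) j - V (π (i + 1) (A s)) j) ^ 2) := by
              apply Finset.sum_le_sum
              intro j _
              nlinarith [sq_nonneg (2 * V (A s) j - V (π i (A s)) j - V (π (i + 1) (A s)) j)]
          _ = 2 * ∑ j, (V (A s) j - V (π i (A s)) j) ^ 2 + 2 * ∑ j, (V (A s) j - V (π (i + 1) (A s)) j) ^ 2 := by
              rw [Finset.sum_add_distrib, Finset.mul_sum, Finset.mul_sum]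
          _ ≤ _ := by nlinarith)
    refine hb.trans ?_
    have : √(E i + E (i + 1)) ≤ √(E i) + √(E (i + 1)) :=
      sqrt_add_le' _ _ (by linarith [hE i]) (by linarith [hE (i + 1)])
    have := hτ i
    calc _ = 6 * τ i * √(E i + E (i + 1)) := by ring
      _ ≤ _ := by gcongr

lemma tail_term (N i k0 : ℕ) (y : ℝ) (hy0 : 0 < y) (hy : y ^ 4 = 1 / 2) (hN : N ^ 4 ≤ 2 ^ k0) (hi : k0 ≤ i) :
    193 * (N : ℝ) * i * (y ^ i) ^ 4 ≤ (40 * y ^ i) ^ 2 := by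
  have hyi : 0 < y ^ i := by positivity
  have h1 : (N : ℝ) * y ^ i ≤ 1 := by
    have h2 : ((N : ℝ) * y ^ i) ^ 4 ≤ 1 ^ 4 := by
      rw [mul_pow, ← pow_mul, mul_comm i 4, pow_mul, hy, one_div, inv_pow, one_pow,
        ← div_eq_mul_inv, div_le_one (by positivity)]
      calc (N : ℝ) ^ 4 ≤ 2 ^ k0 := by exact_mod_cast hN
        _ ≤ _ := pow_le_pow_right₀ (by norm_num) hi
    exact le_of_pow_le_pow_left₀ (by norm_num) (by norm_num) h2
  have hy1 : y ≤ 17 / 20 := by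
    have : y ^ 4 ≤ (17 / 20) ^ 4 := by rw [hy]; norm_num
    exact le_of_pow_le_pow_left₀ (by norm_num) (by norm_num) this
  have h3 : (i : ℝ) * y ^ i ≤ 8 := by
    have hz := one_add_mul_le_pow (a := y⁻¹ - 1) (by have : 0 < y⁻¹ := by positivity
                                                     linarith) i
    have hyy : 20 / 17 ≤ y⁻¹ := by
      rw [le_inv_comm₀ (by norm_num) hy0]; norm_num; linarith
    rw [add_sub_cancel, inv_pow] at hz
    have hz2 : (i : ℝ) * (1 / 8) ≤ (y ^ i)⁻¹ := by
      refine le_trans ?_ hz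
      have : (0 : ℝ) ≤ i := by positivity
      nlinarith
    rw [← one_div, le_div_iff₀ hyi] at hz2
    linarith
  calc 193 * (N : ℝ) * i * (y ^ i) ^ 4 = 193 * (N * y ^ i) * (i * y ^ i) * (y ^ i) ^ 2 := by ring
    _ ≤ 193 * 1 * 8 * (y ^ i) ^ 2 := by gcongr
    _ ≤ _ := by nlinarith [sq_nonneg (y ^ i)]

lemma sum_beta (I k0 : ℕ) (c y : ℝ) (hc : 0 ≤ c) (hy0 : 0 < y) (hy : y ^ 4 = 1 / 2) :
    ∑ i ∈ Finset.range (I + 1), ((if i ≤ k0 then c else 0) + 40 * y ^ i) ≤ (k0 + 1) * c + 267 := by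
  have hy1 : y ≤ 17 / 20 := by
    have : y ^ 4 ≤ (17 / 20) ^ 4 := by rw [hy]; norm_num
    exact le_of_pow_le_pow_left₀ (by norm_num) (by norm_num) this
  rw [Finset.sum_add_distrib, ← Finset.sum_filter, ← Finset.mul_sum, Finset.sum_const, nsmul_eq_mul]
  have h1 : (((Finset.range (I + 1)).filter (fun i => i ≤ k0)).card : ℝ) ≤ k0 + 1 := by
    have : ((Finset.range (I + 1)).filter (fun i => i ≤ k0)).card ≤ (Finset.range (k0 + 1)).card := by
      apply Finset.card_le_card
      intro i hi
      rw [Finset.mem_filter] at hi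
      rw [Finset.mem_range]; omega
    rw [Finset.card_range] at this
    exact_mod_cast this
  have h2 : ∑ i ∈ Finset.range (I + 1), y ^ i ≤ 20 / 3 := by
    have hg := geom_sum_mul y (I + 1)
    have : 0 < y ^ (I + 1) := by positivity
    have hs : 0 ≤ ∑ i ∈ Finset.range (I + 1), y ^ i := by positivity
    nlinarith
  have := mul_le_mul_of_nonneg_right h1 hc
  linarith

end Chain

open MeasureTheory

section ChainApp
variable {Φ : ℝ → ℝ} {p a1 aP q : ℝ}

set_option maxHeartbeats 1000000 in
lemma chain_app (hΦ : PhiH Φ p a1 aP q) {Ω : Type*} [MeasurableSpace Ω] (μ : Measure Ω)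
    [IsProbabilityMeasure μ] {N : ℕ} (hN : 1 ≤ N) (u : Ω → EuclideanSpace ℝ (Fin N))
    (hum : Measurable u) (h : ℝ) (hh : 1 ≤ h) (hu : ∀ y, ‖u y‖ ≤ h)
    (hiso : ∀ a, ‖a‖ ^ 2 = ∫ y, (inner ℝ (u y) a) ^ 2 ∂μ)
    (M D : ℝ) (hM : 0 < M) (hD : 0 < D) (hDM : D ^ p = M * h ^ 2)
    (k : ℕ) (hk : 1 ≤ k) (hk4 : h ^ 2 ≤ 4 ^ (2 * k - 2))
    (T : Finset (EuclideanSpace ℝ (Fin N))) (hT : T.Nonempty)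
    (hTM : ∀ a ∈ T, ∀ b ∈ T, ∫ y, |inner ℝ (u y) (a - b)| ^ p ∂μ ≤ M)
    (hTD : ∀ a ∈ T, ∀ y, |inner ℝ (u y) a| ≤ D)
    (m : ℕ) (hm : 1 ≤ m) (r : ℕ) (hr : Real.log (4 * m) ≤ k * 4 ^ r) (x : Fin m → Ω)
    (R : ℝ) (hR : 0 < R) (hTR : ∀ a ∈ T, ∑ j, Φ |inner ℝ (u (x j)) a| ≤ m * R)
    (k0 : ℕ) (hk0 : N ^ 4 ≤ 2 ^ k0)
    (Y : (Fin m → Bool) → ℝ)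
    (hY : ∀ s, ∃ a ∈ T, Y s ≤ |sx s (fun j => Φ |inner ℝ (u (x j)) a|)|) :
    avg Y ≤ 6000 * (k0 + 1) * √(k * ((2 : ℝ) ^ p) ^ r) * √(2 * q ^ 2 * aP * Φ D * m * R) := by
  have hq := hΦ.hq
  have haP := hΦ.haP
  have hPD := hΦ.pos hD
  have hp := hΦ.hp
  have hp2 := hΦ.hp2
  have hm' : (1 : ℝ) ≤ m := by exact_mod_cast hm
  have hk' : (1 : ℝ) ≤ k := by exact_mod_cast hk
  have hN' : (1 : ℝ) ≤ N := by exact_mod_cast hN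
  have hcm := cov_main μ u hum h hh hu hiso p hp hp2 M D hM hD hDM k hk hk4 T hT hTM m hm r hr x
  have hcv := cov_vol N hN T hT (D / h) (by positivity) (by
    intro a ha b hb
    have := sup_bd μ u hum h hh hu hiso p hp hp2 M D hD hDM (a - b) (hTM a ha b hb)
    rw [le_div_iff₀ (by positivity)]; linarith)
  have hb2 : (2 : ℝ) ≤ 2 ^ p := by
    calc (2 : ℝ) = 2 ^ (1 : ℝ) := by norm_num
      _ ≤ _ := Real.rpow_le_rpow_of_exponent_le (by norm_num) (by linarith)
  have hb4 : (2 : ℝ) ^ p ≤ 4 := by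
    calc (2 : ℝ) ^ p ≤ 2 ^ (2 : ℝ) := Real.rpow_le_rpow_of_exponent_le (by norm_num) hp2
      _ = _ := by norm_num
  have hbi : ∀ i : ℕ, ((1 : ℝ) / 2 ^ i) ^ p = (((2 : ℝ) ^ p) ^ i)⁻¹ := by
    intro i
    rw [Real.div_rpow zero_le_one (by positivity), Real.one_rpow, one_div,
      ← Real.rpow_natCast (2 : ℝ) i, ← Real.rpow_natCast ((2 : ℝ) ^ p) i, ← Real.rpow_mul (by norm_num),
      ← Real.rpow_mul (by norm_num), mul_comm]
  set b : ℝ := 2 ^ p with hb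
  set A : ℝ := 2 * q ^ 2 * aP * Φ D * m * R with hA
  have hA0 : 0 < A := by positivity
  set V : EuclideanSpace ℝ (Fin N) → Fin m → ℝ := fun a j => Φ |inner ℝ (u (x j)) a| with hV
  have hVn : ∀ a j, 0 ≤ V a j := fun a j => hΦ.nn (abs_nonneg _)
  set τ : ℕ → ℝ := fun i => √(A / b ^ i) with hτ
  have hτ2 : ∀ i, τ i ^ 2 = A / b ^ i := fun i => Real.sq_sqrt (by positivity)
  have hτ0 : ∀ i, 0 < τ i := fun i => Real.sqrt_pos.2 (by positivity)
  set E : ℕ → ℝ := fun i => if i ≤ k0 then 982 * k * b ^ (i + r) else 193 * N * i with hE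
  have hconv : ∀ i, ∀ a ∈ T, ∀ f ∈ T, (∀ l, |inner ℝ (u (x l)) (a - f)| ≤ D / 2 ^ i) →
      ∑ j, (V a j - V f j) ^ 2 ≤ τ i ^ 2 := by
    intro i a ha f hf hl
    have h1 : ∀ j, (V a j - V f j) ^ 2 ≤ q ^ 2 * aP * Φ D * (b ^ i)⁻¹ * (V a j + V f j) := by
      intro j
      have hl' := hl j
      rw [inner_sub_right] at hl'
      have := hΦ.sq hD (hTD a ha (x j)) (hTD f hf (x j)) hl'
      have e : D / 2 ^ i / D = 1 / 2 ^ i := by field_simp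
      rwa [e, hbi] at this
    calc ∑ j, (V a j - V f j) ^ 2 ≤ ∑ j, q ^ 2 * aP * Φ D * (b ^ i)⁻¹ * (V a j + V f j) :=
          Finset.sum_le_sum fun j _ => h1 j
      _ = q ^ 2 * aP * Φ D * (b ^ i)⁻¹ * (∑ j, V a j + ∑ j, V f j) := by
          rw [← Finset.mul_sum, Finset.sum_add_distrib]
      _ ≤ q ^ 2 * aP * Φ D * (b ^ i)⁻¹ * (m * R + m * R) := by
          have := hTR a ha
          have := hTR f hf
          gcongr
      _ = τ i ^ 2 := by rw [hτ2, hA]; ring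
  have hE1 : ∀ i, 1 ≤ E i := by
    intro i
    simp only [hE]
    split_ifs with hi
    · have : 1 ≤ b ^ (i + r) := one_le_pow₀ (by linarith)
      nlinarith
    · have : (1 : ℝ) ≤ i := by exact_mod_cast (by omega : 1 ≤ i)
      nlinarith
  have hch := chain T V m E τ hE1 hτ0 (by
      intro i
      apply Real.sqrt_le_sqrt
      gcongr
      · linarith
      · omega) (by
      intro a ha
      rw [hτ2, pow_zero, div_one]
      calc ∑ j, V a j ^ 2 ≤ ∑ j, Φ D * V a j := by
            apply Finset.sum_le_sum
            intro j _
            have h1 : V a j ≤ Φ D := hΦ.mono (abs_nonneg _) (hTD a ha _)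
            have := hVn a j
            nlinarith
        _ = Φ D * ∑ j, V a j := by rw [Finset.mul_sum]
        _ ≤ Φ D * (m * R) := by have := hTR a ha; gcongr
        _ = 1 * (Φ D * (m * R)) := by ring
        _ ≤ (2 * q ^ 2 * aP) * (Φ D * (m * R)) := by
            gcongr
            have : 1 ≤ q ^ 2 := one_le_pow₀ hq
            nlinarith
        _ = A := by rw [hA]; ring) (by
      intro i
      by_cases hi : i ≤ k0
      · obtain ⟨F, hF, hFc, hF2⟩ := hcm i
        refine ⟨F, hF, by simpa only [hE, if_pos hi] using hFc, fun a ha => ?_⟩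
        obtain ⟨f, hf, hl⟩ := hF2 a ha
        exact ⟨f, hf, hconv i a ha f (hF hf) hl⟩
      · obtain ⟨F, hF, hFc, hF2⟩ := hcv i
        refine ⟨F, hF, by simpa only [hE, if_neg hi] using hFc, fun a ha => ?_⟩
        obtain ⟨f, hf, hl⟩ := hF2 a ha
        refine ⟨f, hf, hconv i a ha f (hF hf) fun l => ?_⟩
        refine (inner_bd u h hu _ _).trans ?_
        calc h * ‖a - f‖ ≤ h * (D / h / 2 ^ i) := by gcongr
          _ = _ := by field_simp) Y hY
  refine hch.trans ?_
  obtain ⟨y, hy0, hy⟩ : ∃ y : ℝ, 0 < y ∧ y ^ 4 = 1 / 2 := by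
    refine ⟨√√(1 / 2), by positivity, ?_⟩
    rw [show 4 = 2 * 2 by norm_num, pow_mul, Real.sq_sqrt (by positivity), Real.sq_sqrt (by positivity)]
  set g := √(k * b ^ r) with hg
  have hg1 : 1 ≤ g := by
    rw [hg, Real.one_le_sqrt]
    have : 1 ≤ b ^ r := one_le_pow₀ (by linarith)
    nlinarith
  set β : ℕ → ℝ := fun i => (if i ≤ k0 then 32 * g else 0) + 40 * y ^ i with hβ
  have hβ0 : ∀ i, 0 ≤ β i := by
    intro i
    simp only [hβ]
    split_ifs <;> positivity
  have hS : ∀ i, τ i * √(E i) ≤ √A * β i := by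
    intro i
    rw [hτ, ← Real.sqrt_mul (by positivity)]
    have hbip : 0 < b ^ i := by positivity
    have h1 : A / b ^ i * E i ≤ A * β i ^ 2 := by
      rw [div_mul_eq_mul_div, mul_div_assoc]
      gcongr
      simp only [hE, hβ]
      split_ifs with hi
      · have e : 982 * k * b ^ (i + r) / b ^ i = 982 * g ^ 2 := by
          rw [hg, Real.sq_sqrt (by positivity), pow_add]; field_simp
        rw [e]
        have : 0 < y ^ i := by positivity
        nlinarith
      · have := tail_term N i k0 y hy0 hy hk0 (by omega)
        rw [zero_add]
        refine le_trans ?_ this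
        rw [div_eq_mul_inv]
        gcongr
        rw [← pow_mul, mul_comm i 4, pow_mul, hy, one_div, inv_pow]
        gcongr
    calc √(A / b ^ i * E i) ≤ √(A * β i ^ 2) := Real.sqrt_le_sqrt h1
      _ = √A * β i := by rw [Real.sqrt_mul hA0.le, Real.sqrt_sq (hβ0 i)]
  have hτs : ∀ i, τ i ≤ 2 * τ (i + 1) := by
    intro i
    apply Real.sqrt_le_iff.2
    refine ⟨by have := hτ0 (i + 1); positivity, ?_⟩
    rw [mul_pow, hτ2, pow_succ b i]
    have : A / b ^ i = b * (A / (b ^ i * b)) := by field_simp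
    rw [this]
    have : 0 < A / (b ^ i * b) := by positivity
    nlinarith
  have hS2 : ∀ i, τ i * √(E (i + 1)) ≤ 2 * (√A * β (i + 1)) := by
    intro i
    calc _ ≤ 2 * τ (i + 1) * √(E (i + 1)) := by gcongr; exact hτs i
      _ = 2 * (τ (i + 1) * √(E (i + 1))) := by ring
      _ ≤ _ := by linarith [hS (i + 1)]
  have hsum : ∑ i ∈ Finset.range m, 6 * τ i * (√(E i) + √(E (i + 1))) ≤
      18 * √A * ∑ i ∈ Finset.range (m + 1), β i := by
    have s1 : ∑ i ∈ Finset.range m, β i ≤ ∑ i ∈ Finset.range (m + 1), β i := by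
      rw [Finset.sum_range_succ]; linarith [hβ0 m]
    have s2 : ∑ i ∈ Finset.range m, β (i + 1) ≤ ∑ i ∈ Finset.range (m + 1), β i := by
      rw [Finset.sum_range_succ']; linarith [hβ0 0]
    calc _ ≤ ∑ i ∈ Finset.range m, (6 * √A * β i + 12 * √A * β (i + 1)) := by
          apply Finset.sum_le_sum
          intro i _
          have := hS i
          have := hS2 i
          have e : 6 * τ i * (√(E i) + √(E (i + 1))) = 6 * (τ i * √(E i)) + 6 * (τ i * √(E (i + 1))) := by
            ring
          rw [e]
          linarith
      _ = 6 * √A * ∑ i ∈ Finset.range m, β i + 12 * √A * ∑ i ∈ Finset.range m, β (i + 1) := by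
          rw [Finset.sum_add_distrib, Finset.mul_sum, Finset.mul_sum]
      _ ≤ 6 * √A * ∑ i ∈ Finset.range (m + 1), β i + 12 * √A * ∑ i ∈ Finset.range (m + 1), β i := by
          gcongr
      _ = _ := by ring
  have hsb := sum_beta m k0 (32 * g) y (by positivity) hy0 hy
  have h0 : 3 * τ 0 * √(E 0) ≤ 3 * (√A * (32 * g + 40)) := by
    have := hS 0
    have e : β 0 = 32 * g + 40 := by simp [hβ]
    rw [e] at this
    linarith
  have hrem : √m * τ m ≤ √A := by
    rw [hτ, ← Real.sqrt_mul (by positivity)]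
    apply Real.sqrt_le_sqrt
    rw [mul_div_assoc', div_le_iff₀ (by positivity), mul_comm]
    gcongr
    calc (m : ℝ) ≤ 2 ^ m := by exact_mod_cast (Nat.lt_two_pow_self (n := m)).le
      _ ≤ _ := by gcongr
  have hsA : 0 < √A := Real.sqrt_pos.2 hA0
  have hk00 : (0 : ℝ) ≤ k0 := by positivity
  have hf : 3 * (32 * g + 40) + 18 * ((k0 + 1) * (32 * g) + 267) + 1 ≤ 6000 * (k0 + 1) * g := by
    nlinarith [mul_nonneg hk00 (by linarith : 0 ≤ g)]
  calc _ ≤ 3 * (√A * (32 * g + 40)) + 18 * √A * ((k0 + 1) * (32 * g) + 267) + √A := by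
        refine add_le_add (add_le_add h0 (hsum.trans ?_)) hrem
        gcongr
    _ = √A * (3 * (32 * g + 40) + 18 * ((k0 + 1) * (32 * g) + 267) + 1) := by ring
    _ ≤ √A * (6000 * (k0 + 1) * g) := by gcongr
    _ = _ := by ring

end ChainApp

open MeasureTheory

section Symm

lemma sup_abs_bd {ι : Type*} (T : Finset ι) (hT : T.Nonempty) (g : ι → ℝ) (C : ℝ)
    (h : ∀ a ∈ T, |g a| ≤ C) : |T.sup' hT (fun a => |g a|)| ≤ C := by
  rw [abs_of_nonneg]
  · exact Finset.sup'_le _ _ h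
  · obtain ⟨a, ha⟩ := hT
    exact (abs_nonneg (g a)).trans (Finset.le_sup' (fun a => |g a|) ha)

lemma sup_abs_meas {ι β : Type*} [MeasurableSpace β] (T : Finset ι) (hT : T.Nonempty)
    (g : ι → β → ℝ) (h : ∀ a, Measurable (g a)) :
    Measurable (fun x => T.sup' hT (fun a => |g a x|)) := by
  have := Finset.measurable_sup' hT (f := fun a x => |g a x|) (fun a _ => (h a).abs)
  convert this using 1
  ext x
  simp [Finset.sup'_apply]

lemma swap_mp {Ω : Type*} [MeasurableSpace Ω] (μ : Measure Ω) [IsProbabilityMeasure μ] {m : ℕ}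
    (s : Fin m → Bool) :
    MeasurePreserving (fun z : (Fin m → Ω) × (Fin m → Ω) =>
      ((fun j => if s j then z.1 j else z.2 j), (fun j => if s j then z.2 j else z.1 j)))
      ((Measure.pi fun _ : Fin m => μ).prod (Measure.pi fun _ : Fin m => μ))
      ((Measure.pi fun _ : Fin m => μ).prod (Measure.pi fun _ : Fin m => μ)) := by
  have h1 := measurePreserving_arrowProdEquivProdArrow Ω Ω (Fin m) (fun _ => μ) (fun _ => μ)
  have h0 := MeasurePreserving.symm _ h1
  have h2 : MeasurePreserving (fun (w : Fin m → Ω × Ω) (j : Fin m) =>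
      (if s j then id else Prod.swap) (w j))
      (Measure.pi fun _ : Fin m => μ.prod μ) (Measure.pi fun _ : Fin m => μ.prod μ) := by
    refine measurePreserving_pi (fun _ => μ.prod μ) (fun _ => μ.prod μ) (f := fun j => if s j then id else Prod.swap) (fun j => ?_)
    by_cases h : s j
    · simp only [h, if_true]; exact MeasurePreserving.id _
    · simp only [h]; exact Measure.measurePreserving_swap
  have h3 := h1.comp (h2.comp h0)
  convert h3 using 1
  ext z j
  · by_cases h : s j <;> simp [MeasurableEquiv.arrowProdEquivProdArrow, Equiv.arrowProdEquivProdArrow, h]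
  · by_cases h : s j <;> simp [MeasurableEquiv.arrowProdEquivProdArrow, Equiv.arrowProdEquivProdArrow, h]

lemma symm_bd {Ω : Type*} [MeasurableSpace Ω] (μ : Measure Ω) [IsProbabilityMeasure μ]
    {ι : Type*} (T : Finset ι) (hT : T.Nonempty) (φ : ι → Ω → ℝ) (hφ : ∀ a, Measurable (φ a))
    (B : ℝ) (hB : ∀ a ∈ T, ∀ y, |φ a y| ≤ B) (m : ℕ) :
    ∫ x, T.sup' hT (fun a => |∑ j, φ a (x j) - m * ∫ y, φ a y ∂μ|) ∂(Measure.pi fun _ : Fin m => μ)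
    ≤ 2 * ∫ x, avg (fun s => T.sup' hT (fun a => |sx s (fun j => φ a (x j))|))
      ∂(Measure.pi fun _ : Fin m => μ) := by
  set P := (Measure.pi fun _ : Fin m => μ) with hP
  set W : (Fin m → Ω) × (Fin m → Ω) → ℝ := fun z =>
    T.sup' hT (fun a => |∑ j, (φ a (z.1 j) - φ a (z.2 j))|) with hW
  set Q : (Fin m → Bool) → (Fin m → Ω) → ℝ := fun s x =>
    T.sup' hT (fun a => |sx s (fun j => φ a (x j))|) with hQ
  have hWm : Measurable W := by
    apply sup_abs_meas
    intro a
    have := hφ a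
    fun_prop
  have hQm : ∀ s, Measurable (Q s) := by
    intro s
    apply sup_abs_meas
    intro a
    have := hφ a
    unfold sx
    fun_prop
  have hWb : ∀ z, |W z| ≤ m * (B + B) := by
    intro z
    apply sup_abs_bd
    intro a ha
    refine (Finset.abs_sum_le_sum_abs _ _).trans ?_
    refine (Finset.sum_le_card_nsmul _ _ (B + B) ?_).trans ?_
    · intro j _
      exact (abs_sub _ _).trans (add_le_add (hB a ha _) (hB a ha _))
    · simp [mul_add]
  have hQb : ∀ s x, |Q s x| ≤ m * B := by
    intro s x
    apply sup_abs_bd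
    intro a ha
    refine (Finset.abs_sum_le_sum_abs _ _).trans ?_
    refine (Finset.sum_le_card_nsmul _ _ B ?_).trans ?_
    · intro j _
      rw [abs_mul]
      have : |sgn (s j)| = 1 := by unfold sgn; split_ifs <;> simp
      rw [this, one_mul]
      exact hB a ha _
    · simp
  have hWi : Integrable W (P.prod P) := int_bdd _ hWm _ hWb
  have hQi : ∀ s, Integrable (Q s) P := fun s => int_bdd _ (hQm s) _ (hQb s)
  have h1 : ∀ x, T.sup' hT (fun a => |∑ j, φ a (x j) - m * ∫ y, φ a y ∂μ|) ≤ ∫ x', W (x, x') ∂P := by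
    intro x
    apply Finset.sup'_le
    intro a ha
    have hWx : Integrable (fun x' => W (x, x')) P :=
      int_bdd _ (hWm.comp measurable_prodMk_left) _ (fun x' => hWb _)
    have hφi : Integrable (φ a) μ := int_bdd _ (hφ a) B (hB a ha)
    have hi : ∀ j : Fin m, Integrable (fun x' : Fin m → Ω => φ a (x j) - φ a (x' j)) P := by
      intro j
      refine (integrable_const _).sub ?_
      exact int_bdd _ ((hφ a).comp (measurable_pi_apply j)) B (fun x' => hB a ha _)
    have e : ∑ j, φ a (x j) - m * ∫ y, φ a y ∂μ = ∫ x', ∑ j, (φ a (x j) - φ a (x' j)) ∂P := by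
      rw [integral_finsetSum _ (fun j _ => hi j)]
      have : ∀ j : Fin m, ∫ x', (φ a (x j) - φ a (x' j)) ∂P = φ a (x j) - ∫ y, φ a y ∂μ := by
        intro j
        have hj : Integrable (fun x' : Fin m → Ω => φ a (x' j)) P :=
          int_bdd _ ((hφ a).comp (measurable_pi_apply j)) B (fun x' => hB a ha _)
        rw [integral_sub (integrable_const _) hj]
        rw [hP, integral_comp_eval (μ := fun _ : Fin m => μ) (f := φ a)
          (hφ a).aestronglyMeasurable]
        simp
      simp only [this]
      simp
    rw [e]
    refine abs_integral_le_integral_abs.trans ?_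
    refine integral_mono_of_nonneg (Filter.Eventually.of_forall fun _ => abs_nonneg _) hWx
      (Filter.Eventually.of_forall fun x' => ?_)
    exact Finset.le_sup' (fun a => |∑ j, (φ a (x j) - φ a (x' j))|) ha
  have h2 : ∫ x, T.sup' hT (fun a => |∑ j, φ a (x j) - m * ∫ y, φ a y ∂μ|) ∂P
      ≤ ∫ z, W z ∂(P.prod P) := by
    rw [integral_prod _ hWi]
    refine integral_mono_of_nonneg (Filter.Eventually.of_forall fun x => ?_)
      hWi.integral_prod_left (Filter.Eventually.of_forall h1)
    obtain ⟨a, ha⟩ := hT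
    exact (abs_nonneg _).trans (Finset.le_sup' (fun a => |∑ j, φ a (x j) - m * ∫ y, φ a y ∂μ|) ha)
  have h3 : ∀ s, ∫ z, W z ∂(P.prod P) ≤ 2 * ∫ x, Q s x ∂P := by
    intro s
    have mp := swap_mp μ s
    rw [← hP] at mp
    rw [← mp.map_eq, integral_map mp.measurable.aemeasurable hWm.aestronglyMeasurable]
    have hs : Integrable (fun z : (Fin m → Ω) × (Fin m → Ω) => Q s z.1 + Q s z.2) (P.prod P) := by
      refine Integrable.add ?_ ?_
      · exact int_bdd _ ((hQm s).comp measurable_fst) _ (fun z => hQb s _)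
      · exact int_bdd _ ((hQm s).comp measurable_snd) _ (fun z => hQb s _)
    have : ∫ z, (Q s z.1 + Q s z.2) ∂(P.prod P) = 2 * ∫ x, Q s x ∂P := by
      have i1 : Integrable (fun z : (Fin m → Ω) × (Fin m → Ω) => Q s z.1) (P.prod P) :=
        int_bdd _ ((hQm s).comp measurable_fst) _ (fun z => hQb s _)
      have i2 : Integrable (fun z : (Fin m → Ω) × (Fin m → Ω) => Q s z.2) (P.prod P) :=
        int_bdd _ ((hQm s).comp measurable_snd) _ (fun z => hQb s _)
      rw [integral_add i1 i2, integral_fun_fst, integral_fun_snd]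
      simp; ring
    rw [← this]
    refine integral_mono (int_bdd _ (hWm.comp mp.measurable) _ (fun z => hWb _)) hs ?_
    intro z
    apply Finset.sup'_le
    intro a ha
    have e : ∑ j, (φ a (if s j then z.1 j else z.2 j) - φ a (if s j then z.2 j else z.1 j))
        = sx s (fun j => φ a (z.1 j)) - sx s (fun j => φ a (z.2 j)) := by
      unfold sx
      rw [← Finset.sum_sub_distrib]
      refine Finset.sum_congr rfl fun j _ => ?_
      unfold sgn
      split_ifs <;> ring
    dsimp only
    rw [e]
    exact (abs_sub _ _).trans (add_le_add
      (Finset.le_sup' (fun a => |sx s (fun j => φ a (z.1 j))|) ha)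
      (Finset.le_sup' (fun a => |sx s (fun j => φ a (z.2 j))|) ha))
  refine h2.trans ?_
  have h4 : ∫ x, avg (fun s => Q s x) ∂P = avg (fun s => ∫ x, Q s x ∂P) := by
    unfold avg
    rw [integral_div, integral_finsetSum _ (fun s _ => hQi s)]
  rw [h4, ← avg_const_mul, ← avg_const (m := m) (∫ z, W z ∂(P.prod P))]
  exact avg_mono h3

end Symm

open MeasureTheory

section Expect
variable {Φ : ℝ → ℝ} {p a1 aP q : ℝ}

set_option maxHeartbeats 1000000 in
lemma exp_bd (hΦ : PhiH Φ p a1 aP q) {Ω : Type*} [MeasurableSpace Ω] (μ : Measure Ω)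
    [IsProbabilityMeasure μ] {N : ℕ} (hN : 1 ≤ N) (u : Ω → EuclideanSpace ℝ (Fin N))
    (hum : Measurable u) (h : ℝ) (hh : 1 ≤ h) (hu : ∀ y, ‖u y‖ ≤ h)
    (hiso : ∀ a, ‖a‖ ^ 2 = ∫ y, (inner ℝ (u y) a) ^ 2 ∂μ)
    (M D : ℝ) (hM : 8 * (1 + aP / Φ 1) ≤ M) (hD : 0 < D) (hDM : D ^ p = M * h ^ 2)
    (k : ℕ) (hk : 1 ≤ k) (hk4 : h ^ 2 ≤ 4 ^ (2 * k - 2))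
    (T : Finset (EuclideanSpace ℝ (Fin N))) (hT : T.Nonempty)
    (hT1 : ∀ a ∈ T, ∫ y, Φ |inner ℝ (u y) a| ∂μ ≤ 1)
    (m : ℕ) (hm : 1 ≤ m) (r : ℕ) (hr : Real.log (4 * m) ≤ k * 4 ^ r)
    (k0 : ℕ) (hk0 : N ^ 4 ≤ 2 ^ k0) (τ : ℝ) (hτ : τ ≤ 1)
    (hκ : 2 * (6000 * (k0 + 1) * √(k * ((2 : ℝ) ^ p) ^ r) * √(2 * q ^ 2 * aP * Φ D * m)) ≤ m * τ) :
    ∫ x, T.sup' hT (fun a => |∑ j, Φ |inner ℝ (u (x j)) a| - m * ∫ y, Φ |inner ℝ (u y) a| ∂μ|)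
      ∂(Measure.pi fun _ : Fin m => μ) ≤ 2 * m * τ ∧
    Integrable (fun x : Fin m → Ω => T.sup' hT
      (fun a => |∑ j, Φ |inner ℝ (u (x j)) a| - m * ∫ y, Φ |inner ℝ (u y) a| ∂μ|))
      (Measure.pi fun _ : Fin m => μ) := by
  have hp := hΦ.hp
  have hp2 := hΦ.hp2
  have haP := hΦ.haP
  have hq := hΦ.hq
  have hP1 := hΦ.pos one_pos
  have hPD := hΦ.pos hD
  have hm' : (1 : ℝ) ≤ m := by exact_mod_cast hm
  have hc0 : 0 < 1 + aP / Φ 1 := by positivity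
  have hM0 : 0 < M := by linarith
  have hinm : ∀ a, Measurable (fun y => inner ℝ (u y) a) := fun a => hum.inner measurable_const
  have hinb : ∀ a y, |inner ℝ (u y) a| ≤ h * ‖a‖ := fun a y => inner_bd u h hu a y
  have hGm : ∀ a, Measurable (fun y => Φ |inner ℝ (u y) a|) := fun a =>
    hΦ.cont.measurable.comp (hinm a)
  have hpi : ∀ a, Integrable (fun y => |inner ℝ (u y) a| ^ p) μ := by
    intro a
    refine int_bdd μ ((hinm a).abs.pow_const p) ((h * ‖a‖) ^ p) (fun y => ?_)
    rw [abs_of_nonneg (by positivity)]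
    exact Real.rpow_le_rpow (abs_nonneg _) (hinb a y) (by linarith)
  have hGi : ∀ a, Integrable (fun y => Φ |inner ℝ (u y) a|) μ := by
    intro a
    refine int_bdd μ (hGm a) (Φ (h * ‖a‖)) (fun y => ?_)
    rw [abs_of_nonneg (hΦ.nn (abs_nonneg _))]
    exact hΦ.mono (abs_nonneg _) (hinb a y)
  have hTp : ∀ a ∈ T, ∫ y, |inner ℝ (u y) a| ^ p ∂μ ≤ 1 + aP / Φ 1 := by
    intro a ha
    calc _ ≤ ∫ y, (1 + aP / Φ 1 * Φ |inner ℝ (u y) a|) ∂μ :=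
          integral_mono (hpi a) ((integrable_const _).add ((hGi a).const_mul _))
            (fun y => hΦ.pow_le (abs_nonneg _))
      _ = 1 + aP / Φ 1 * ∫ y, Φ |inner ℝ (u y) a| ∂μ := by
          rw [integral_add (integrable_const _) ((hGi a).const_mul _), integral_const_mul]
          simp
      _ ≤ 1 + aP / Φ 1 * 1 := by
          gcongr; exact hT1 a ha
      _ = _ := by ring
  have hTM : ∀ a ∈ T, ∀ b ∈ T, ∫ y, |inner ℝ (u y) (a - b)| ^ p ∂μ ≤ M := by
    intro a ha b hb
    calc _ ≤ ∫ y, (4 * (|inner ℝ (u y) a| ^ p + |inner ℝ (u y) b| ^ p)) ∂μ := by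
          refine integral_mono (hpi _) (((hpi a).add (hpi b)).const_mul _) (fun y => ?_)
          dsimp only
          rw [inner_sub_right]
          exact rpow_sub_le hp hp2 _ _
      _ = 4 * (∫ y, |inner ℝ (u y) a| ^ p ∂μ + ∫ y, |inner ℝ (u y) b| ^ p ∂μ) := by
          rw [integral_const_mul, integral_add (hpi a) (hpi b)]
      _ ≤ M := by linarith [hTp a ha, hTp b hb]
  have hTD : ∀ a ∈ T, ∀ y, |inner ℝ (u y) a| ≤ D := by
    intro a ha y
    refine (hinb a y).trans ?_
    exact sup_bd μ u hum h hh hu hiso p hp hp2 M D hD hDM a ((hTp a ha).trans (by linarith))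
  have hsy := symm_bd μ T hT (fun a y => Φ |inner ℝ (u y) a|) hGm (Φ D) (by
    intro a ha y
    rw [abs_of_nonneg (hΦ.nn (abs_nonneg _))]
    exact hΦ.mono (abs_nonneg _) (hTD a ha y)) m
  set P := (Measure.pi fun _ : Fin m => μ) with hP
  set Z : (Fin m → Ω) → ℝ := fun x => T.sup' hT
    (fun a => |∑ j, Φ |inner ℝ (u (x j)) a| - m * ∫ y, Φ |inner ℝ (u y) a| ∂μ|) with hZ
  have hZle : ∀ x, ∀ a ∈ T,
      |∑ j, Φ |inner ℝ (u (x j)) a| - m * ∫ y, Φ |inner ℝ (u y) a| ∂μ| ≤ Z x := fun x a ha =>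
    Finset.le_sup' (fun a => |∑ j, Φ |inner ℝ (u (x j)) a| - m * ∫ y, Φ |inner ℝ (u y) a| ∂μ|) ha
  have hZ0 : ∀ x, 0 ≤ Z x := by
    intro x
    obtain ⟨a, ha⟩ := hT
    exact (abs_nonneg _).trans (hZle x a ha)
  have hZi : Integrable Z P := by
    refine int_bdd P ?_ (m * (Φ D + 1)) ?_
    · apply sup_abs_meas
      intro a
      exact (Finset.measurable_sum _ fun j _ => (hGm a).comp (measurable_pi_apply j)).sub
        measurable_const
    · intro x
      apply sup_abs_bd
      intro a ha
      have e1 : 0 ≤ ∑ j, Φ |inner ℝ (u (x j)) a| := Finset.sum_nonneg fun j _ => hΦ.nn (abs_nonneg _)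
      have e2 : ∑ j, Φ |inner ℝ (u (x j)) a| ≤ m * Φ D := by
        refine (Finset.sum_le_card_nsmul _ _ (Φ D) fun j _ => ?_).trans (by simp)
        exact hΦ.mono (abs_nonneg _) (hTD a ha _)
      have e3 : 0 ≤ ∫ y, Φ |inner ℝ (u y) a| ∂μ := integral_nonneg fun y => hΦ.nn (abs_nonneg _)
      have e4 := hT1 a ha
      rw [abs_le]
      constructor <;> nlinarith
  refine ⟨?_, hZi⟩
  set K : ℝ := 6000 * (k0 + 1) * √(k * ((2 : ℝ) ^ p) ^ r) with hK
  have hK0 : 0 ≤ K := by positivity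
  set c : ℝ := 2 * q ^ 2 * aP * Φ D * m with hc
  have hav : ∀ x : Fin m → Ω,
      avg (fun s => T.sup' hT (fun a => |sx s (fun j => Φ |inner ℝ (u (x j)) a|)|))
      ≤ K * √c * (1 + Z x / (2 * m)) := by
    intro x
    have hR : 0 < 1 + Z x / m := by have := hZ0 x; positivity
    have := chain_app hΦ μ hN u hum h hh hu hiso M D hM0 hD hDM k hk hk4 T hT hTM hTD m hm r hr x
      (1 + Z x / m) hR (by
        intro a ha
        have e1 := (abs_le.1 (hZle x a ha)).2
        have e2 := hT1 a ha
        have e3 : (m : ℝ) * (1 + Z x / m) = m + Z x := by field_simp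
        rw [e3]
        nlinarith) k0 hk0
      (fun s => T.sup' hT (fun a => |sx s (fun j => Φ |inner ℝ (u (x j)) a|)|)) (by
        intro s
        obtain ⟨a, ha, e⟩ := Finset.exists_mem_eq_sup' hT
          (fun a => |sx s (fun j => Φ |inner ℝ (u (x j)) a|)|)
        exact ⟨a, ha, e.le⟩)
    refine this.trans ?_
    rw [← hK, ← hc, Real.sqrt_mul (by positivity), ← mul_assoc]
    have hs : √(1 + Z x / m) ≤ 1 + Z x / (2 * m) := by
      rw [Real.sqrt_le_left (by have := hZ0 x; positivity)]
      have e : Z x / m = 2 * (Z x / (2 * m)) := by field_simp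
      rw [e]
      nlinarith [sq_nonneg (Z x / (2 * m))]
    exact mul_le_mul_of_nonneg_left hs (by positivity)
  have hfin : ∫ x, avg (fun s => T.sup' hT (fun a => |sx s (fun j => Φ |inner ℝ (u (x j)) a|)|)) ∂P
      ≤ K * √c * (1 + (∫ x, Z x ∂P) / (2 * m)) := by
    have e : K * √c * (1 + (∫ x, Z x ∂P) / (2 * m)) = ∫ x, K * √c * (1 + Z x / (2 * m)) ∂P := by
      rw [integral_const_mul, integral_add (integrable_const _) (hZi.div_const _), integral_div]
      simp
    rw [e]
    refine integral_mono_of_nonneg (Filter.Eventually.of_forall fun x => ?_)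
      (((integrable_const _).add (hZi.div_const _)).const_mul _) (Filter.Eventually.of_forall hav)
    rw [Pi.zero_apply, ← avg_const (m := m) (0 : ℝ)]
    apply avg_mono
    intro s
    obtain ⟨a, ha⟩ := hT
    exact (abs_nonneg _).trans (Finset.le_sup' (fun a => |sx s (fun j => Φ |inner ℝ (u (x j)) a|)|) ha)
  set I := ∫ x, Z x ∂P with hI
  have hI0 : 0 ≤ I := integral_nonneg hZ0
  have h2 : I ≤ m * τ * (1 + I / (2 * m)) := by
    calc I ≤ 2 * (K * √c * (1 + I / (2 * m))) := by linarith [hsy]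
      _ = 2 * (K * √c) * (1 + I / (2 * m)) := by ring
      _ ≤ _ := by gcongr
  have e : m * τ * (1 + I / (2 * m)) = m * τ + τ * I / 2 := by field_simp
  rw [e] at h2
  nlinarith

set_option maxHeartbeats 1000000 in
lemma prob_fin (hΦ : PhiH Φ p a1 aP q) {Ω : Type*} [MeasurableSpace Ω] (μ : Measure Ω)
    [IsProbabilityMeasure μ] {N : ℕ} (hN : 1 ≤ N) (u : Ω → EuclideanSpace ℝ (Fin N))
    (hum : Measurable u) (h : ℝ) (hh : 1 ≤ h) (hu : ∀ y, ‖u y‖ ≤ h)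
    (hiso : ∀ a, ‖a‖ ^ 2 = ∫ y, (inner ℝ (u y) a) ^ 2 ∂μ)
    (M D : ℝ) (hM : 8 * (1 + aP / Φ 1) ≤ M) (hD : 0 < D) (hDM : D ^ p = M * h ^ 2)
    (k : ℕ) (hk : 1 ≤ k) (hk4 : h ^ 2 ≤ 4 ^ (2 * k - 2))
    (T : Finset (EuclideanSpace ℝ (Fin N))) (hT : T.Nonempty)
    (hT1 : ∀ a ∈ T, ∫ y, Φ |inner ℝ (u y) a| ∂μ ≤ 1)
    (m : ℕ) (hm : 1 ≤ m) (r : ℕ) (hr : Real.log (4 * m) ≤ k * 4 ^ r)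
    (k0 : ℕ) (hk0 : N ^ 4 ≤ 2 ^ k0) (ε δ : ℝ) (hε : 0 < ε) (hε1 : ε ≤ 1) (hδ : 0 < δ) (hδ1 : δ ≤ 1)
    (hκ : 2 * (6000 * (k0 + 1) * √(k * ((2 : ℝ) ^ p) ^ r) * √(2 * q ^ 2 * aP * Φ D * m))
      ≤ m * (ε * δ / 4)) :
    (Measure.pi fun _ : Fin m => μ) {x | ∃ a ∈ T,
      ε < |(∑ j, Φ |inner ℝ (u (x j)) a|) / m - ∫ y, Φ |inner ℝ (u y) a| ∂μ|}
      ≤ ENNReal.ofReal (δ / 2) := by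
  have hm' : (1 : ℝ) ≤ m := by exact_mod_cast hm
  obtain ⟨h1, h2⟩ := exp_bd hΦ μ hN u hum h hh hu hiso M D hM hD hDM k hk hk4 T hT hT1 m hm r hr
    k0 hk0 (ε * δ / 4) (by nlinarith) hκ
  set P := (Measure.pi fun _ : Fin m => μ) with hP
  set Z : (Fin m → Ω) → ℝ := fun x => T.sup' hT
    (fun a => |∑ j, Φ |inner ℝ (u (x j)) a| - m * ∫ y, Φ |inner ℝ (u y) a| ∂μ|) with hZ
  have hZle : ∀ x, ∀ a ∈ T,
      |∑ j, Φ |inner ℝ (u (x j)) a| - m * ∫ y, Φ |inner ℝ (u y) a| ∂μ| ≤ Z x := fun x a ha =>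
    Finset.le_sup' (fun a => |∑ j, Φ |inner ℝ (u (x j)) a| - m * ∫ y, Φ |inner ℝ (u y) a| ∂μ|) ha
  have hZ0 : ∀ x, 0 ≤ Z x := by
    intro x
    obtain ⟨a, ha⟩ := hT
    exact (abs_nonneg _).trans (hZle x a ha)
  have hmk := mul_meas_ge_le_integral_of_nonneg (Filter.Eventually.of_forall hZ0) h2 (m * ε)
  have h3 : P.real {x | m * ε ≤ Z x} ≤ δ / 2 := by
    have : m * ε * P.real {x | m * ε ≤ Z x} ≤ m * ε * (δ / 2) := by
      refine hmk.trans (h1.trans (le_of_eq ?_)); ring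
    exact le_of_mul_le_mul_left this (by positivity)
  calc P _ ≤ P {x | m * ε ≤ Z x} := by
        apply measure_mono
        rintro x ⟨a, ha, hx⟩
        refine le_trans ?_ (hZle x a ha)
        have e : (∑ j, Φ |inner ℝ (u (x j)) a|) / m - ∫ y, Φ |inner ℝ (u y) a| ∂μ
          = (∑ j, Φ |inner ℝ (u (x j)) a| - m * ∫ y, Φ |inner ℝ (u y) a| ∂μ) / m := by field_simp
        rw [e, abs_div, abs_of_pos (by positivity : (0 : ℝ) < m), lt_div_iff₀ (by positivity)] at hx
        linarith
    _ = ENNReal.ofReal (P.real {x | m * ε ≤ Z x}) := by simp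
    _ ≤ _ := ENNReal.ofReal_le_ofReal h3

end Expect

open MeasureTheory

section Expect2
variable {Φ : ℝ → ℝ} {p a1 aP q : ℝ}

set_option maxHeartbeats 1000000 in
lemma prob_all (hΦ : PhiH Φ p a1 aP q) {Ω : Type*} [MetricSpace Ω] [CompactSpace Ω]
    [MeasurableSpace Ω] [BorelSpace Ω] (μ : Measure Ω)
    [IsProbabilityMeasure μ] {N : ℕ} (hN : 1 ≤ N) (u : Ω → EuclideanSpace ℝ (Fin N))
    (huc : Continuous u) (h : ℝ) (hh : 1 ≤ h) (hu : ∀ y, ‖u y‖ ≤ h)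
    (hiso : ∀ a, ‖a‖ ^ 2 = ∫ y, (inner ℝ (u y) a) ^ 2 ∂μ)
    (M D : ℝ) (hM : 8 * (1 + aP / Φ 1) ≤ M) (hD : 0 < D) (hDM : D ^ p = M * h ^ 2)
    (k : ℕ) (hk : 1 ≤ k) (hk4 : h ^ 2 ≤ 4 ^ (2 * k - 2))
    (m : ℕ) (hm : 1 ≤ m) (r : ℕ) (hr : Real.log (4 * m) ≤ k * 4 ^ r)
    (k0 : ℕ) (hk0 : N ^ 4 ≤ 2 ^ k0) (ε δ : ℝ) (hε : 0 < ε) (hε1 : ε ≤ 1) (hδ : 0 < δ) (hδ1 : δ ≤ 1)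
    (hκ : 2 * (6000 * (k0 + 1) * √(k * ((2 : ℝ) ^ p) ^ r) * √(2 * q ^ 2 * aP * Φ D * m))
      ≤ m * (ε * δ / 4)) :
    ENNReal.ofReal (1 - δ / 2) ≤ (Measure.pi fun _ : Fin m => μ)
      {x | ∀ a, ∫ y, Φ |inner ℝ (u y) a| ∂μ ≤ 1 →
        |(∑ j, Φ |inner ℝ (u (x j)) a|) / m - ∫ y, Φ |inner ℝ (u y) a| ∂μ| ≤ ε} := by
  have hm' : (1 : ℝ) ≤ m := by exact_mod_cast hm
  set P := (Measure.pi fun _ : Fin m => μ) with hP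
  have hcont : Continuous fun a => ∫ y, Φ |inner ℝ (u y) a| ∂μ := by
    have := continuous_parametric_integral_of_continuous (μ := μ)
      (f := fun (a : EuclideanSpace ℝ (Fin N)) (y : Ω) => Φ |inner ℝ (u y) a|)
      (by
        have : Continuous fun z : EuclideanSpace ℝ (Fin N) × Ω => (inner ℝ (u z.2) z.1 : ℝ) := by
          fun_prop
        have h2 := hΦ.cont.comp this
        simp only [Function.comp_def] at h2
        unfold Function.uncurry
        exact h2) (isCompact_univ (X := Ω))
    rw [Measure.restrict_univ] at this
    exact this
  have hcG : ∀ y, Continuous fun a => Φ |inner ℝ (u y) a| := fun y =>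
    hΦ.cont.comp (by fun_prop)
  set S : Set (EuclideanSpace ℝ (Fin N)) := {a | ∫ y, Φ |inner ℝ (u y) a| ∂μ ≤ 1} with hS
  have hS0 : (0 : EuclideanSpace ℝ (Fin N)) ∈ S := by
    simp [hS, hΦ.pre.map_zero]
  have hne : Nonempty S := ⟨⟨0, hS0⟩⟩
  obtain ⟨d, hd⟩ := TopologicalSpace.exists_dense_seq S
  set dev : (Fin m → Ω) → EuclideanSpace ℝ (Fin N) → ℝ := fun x a =>
    |(∑ j, Φ |inner ℝ (u (x j)) a|) / m - ∫ y, Φ |inner ℝ (u y) a| ∂μ| with hdev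
  set B : ℕ → Set (Fin m → Ω) := fun n => {x | ∃ i ≤ n, ε < dev x (d i)} with hB
  have hBm : ∀ n, P (B n) ≤ ENNReal.ofReal (δ / 2) := by
    intro n
    classical
    have := prob_fin hΦ μ hN u huc.measurable h hh hu hiso M D hM hD hDM k hk hk4
      ((Finset.range (n + 1)).image fun i => (d i : EuclideanSpace ℝ (Fin N)))
      (by simp) (by
        intro a ha
        simp only [Finset.mem_image] at ha
        obtain ⟨i, _, rfl⟩ := ha
        exact (d i).2) m hm r hr k0 hk0 ε δ hε hε1 hδ hδ1 hκ
    refine le_trans (measure_mono ?_) this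
    rintro x ⟨i, hi, hx⟩
    refine ⟨d i, Finset.mem_image.2 ⟨i, Finset.mem_range.2 (by omega), rfl⟩, ?_⟩
    exact hx
  have hmono : Monotone B := by
    rintro n n' hn x ⟨i, hi, hx⟩
    exact ⟨i, hi.trans hn, hx⟩
  have hU : P (⋃ n, B n) ≤ ENNReal.ofReal (δ / 2) := by
    rw [hmono.measure_iUnion]
    exact iSup_le hBm
  have hmeas : MeasurableSet (⋃ n, B n) := by
    refine MeasurableSet.iUnion fun n => ?_
    have e : B n = ⋃ i ∈ Set.Iic n, {x | ε < dev x (d i)} := by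
      ext x; simp [hB]
    rw [e]
    refine MeasurableSet.biUnion (Set.to_countable _) fun i _ => ?_
    refine measurableSet_lt measurable_const ?_
    have hmg : Measurable fun y => Φ |inner ℝ (u y) (d i : EuclideanSpace ℝ (Fin N))| :=
      hΦ.cont.measurable.comp (huc.measurable.inner measurable_const)
    refine Measurable.abs ?_
    exact ((Finset.measurable_sum _ fun j _ => hmg.comp (measurable_pi_apply j)).div_const _).sub
        measurable_const
  calc ENNReal.ofReal (1 - δ / 2) = 1 - ENNReal.ofReal (δ / 2) := by
        rw [ENNReal.ofReal_sub _ (by positivity)]; simp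
    _ ≤ 1 - P (⋃ n, B n) := by gcongr
    _ = P (⋃ n, B n)ᶜ := (prob_compl_eq_one_sub hmeas).symm
    _ ≤ _ := by
        apply measure_mono
        intro x hx a ha
        simp only [Set.mem_compl_iff, Set.mem_iUnion, not_exists] at hx
        have hcl : IsClosed {a : S | dev x a ≤ ε} := by
          refine isClosed_le ?_ continuous_const
          have h1 : Continuous fun a => dev x a := by
            refine Continuous.abs ?_
            refine Continuous.sub (Continuous.div_const ?_ _) hcont
            exact continuous_finsetSum _ fun j _ => hcG (x j)
          exact h1.comp continuous_subtype_val
        have hsub : Set.range d ⊆ {a : S | dev x a ≤ ε} := by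
          rintro _ ⟨i, rfl⟩
          have := hx i
          simp only [hB] at this
          by_contra hc
          exact this ⟨i, le_rfl, not_le.1 hc⟩
        have := closure_minimal hsub hcl
        rw [hd.closure_range] at this
        have h9 := this (Set.mem_univ (⟨a, ha⟩ : S))
        simp only [Set.mem_ofPred_eq, hdev] at h9
        exact h9

end Expect2

open MeasureTheory

section Repr

lemma le_supNorm_of_cont {Ω : Type*} [TopologicalSpace Ω] [CompactSpace Ω] (f : Ω → ℝ)
    (hf : Continuous f) (y : Ω) : |f y| ≤ supNorm f := by
  unfold supNorm
  refine le_ciSup (f := fun x => |f x|) ?_ y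
  have := (isCompact_univ (X := Ω)).bddAbove_image hf.abs.continuousOn
  simpa [Set.image_univ] using this

set_option maxHeartbeats 1000000 in
lemma repr_exists {Ω : Type*} [MetricSpace Ω] [CompactSpace Ω] [MeasurableSpace Ω] [BorelSpace Ω]
    (μ : Measure Ω) [IsProbabilityMeasure μ] (N : ℕ) (H : ℝ) (hH : 1 ≤ H)
    (X : Submodule ℝ (Ω → ℝ)) (hXc : ∀ f ∈ X, Continuous f) (hXN : Module.finrank ℝ X = N)
    (hN : 1 ≤ N)
    (hX : ∀ f ∈ X, supNorm f ≤ H * Real.sqrt (∫ y, (f y) ^ 2 ∂μ)) :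
    ∃ u : Ω → EuclideanSpace ℝ (Fin N), Continuous u ∧ (∀ y, ‖u y‖ ≤ H) ∧
      (∀ a, ‖a‖ ^ 2 = ∫ y, (inner ℝ (u y) a) ^ 2 ∂μ) ∧
      (∀ f ∈ X, ∃ a, ∀ y, f y = inner ℝ (u y) a) ∧ (N : ℝ) ≤ H ^ 2 := by
  let J : X →ₗ[ℝ] C(Ω, ℝ) :=
    { toFun := fun f => ⟨f.1, hXc f.1 f.2⟩
      map_add' := fun f g => rfl
      map_smul' := fun c f => rfl }
  let L : X →ₗ[ℝ] Lp ℝ 2 μ := (ContinuousMap.toLp (E := ℝ) 2 μ ℝ).toLinearMap ∘ₗ J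
  have hLn : ∀ f : X, ‖L f‖ ^ 2 = ∫ y, (f.1 y) ^ 2 ∂μ := by
    intro f
    rw [← real_inner_self_eq_norm_sq]
    have := ContinuousMap.inner_toLp (𝕜 := ℝ) μ (J f) (J f)
    refine this.trans ?_
    refine integral_congr_ae (Filter.Eventually.of_forall fun y => ?_)
    simp [J, pow_two]
  have hinj : Function.Injective L := by
    rw [← LinearMap.ker_eq_bot, LinearMap.ker_eq_bot']
    intro f hf
    have h1 := hLn f
    rw [hf, norm_zero] at h1
    have h2 := hX f.1 f.2
    rw [← h1] at h2
    ext y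
    have h3 := le_supNorm_of_cont f.1 (hXc _ f.2) y
    simp at h2
    have : |f.1 y| ≤ 0 := h3.trans h2
    simpa using this
  have hfd : FiniteDimensional ℝ X := by
    apply FiniteDimensional.of_finrank_pos; omega
  let E := LinearEquiv.ofInjective L hinj
  have hW : Module.finrank ℝ (LinearMap.range L) = N := by
    rw [← hXN]; exact E.finrank_eq.symm
  have hfd2 : FiniteDimensional ℝ (LinearMap.range L) := E.finiteDimensional
  let e : OrthonormalBasis (Fin N) ℝ (LinearMap.range L) :=
    (stdOrthonormalBasis ℝ (LinearMap.range L)).reindex (finCongr hW)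
  let Ψ : EuclideanSpace ℝ (Fin N) ≃ₗ[ℝ] X := e.repr.symm.toLinearEquiv.trans E.symm
  have hΨn : ∀ a, ‖a‖ ^ 2 = ∫ y, ((Ψ a).1 y) ^ 2 ∂μ := by
    intro a
    rw [← hLn]
    have h1 : L (Ψ a) = (E (Ψ a)).1 := rfl
    have h2 : E (Ψ a) = e.repr.symm a := by simp [Ψ]
    rw [h1, h2]
    have h3 : ‖(e.repr.symm a).1‖ = ‖e.repr.symm a‖ := rfl
    rw [h3, LinearIsometryEquiv.norm_map]
  let u : Ω → EuclideanSpace ℝ (Fin N) := fun y =>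
    WithLp.toLp 2 (fun i => (Ψ (EuclideanSpace.single i (1 : ℝ))).1 y)
  have hui : ∀ y i, u y i = (Ψ (EuclideanSpace.single i (1 : ℝ))).1 y := fun y i => rfl
  have huin : ∀ y a, inner ℝ (u y) a = (Ψ a).1 y := by
    intro y a
    have ha : a = ∑ i, a i • EuclideanSpace.single i (1 : ℝ) := by
      ext j
      simp [Finset.sum_apply, Pi.single_apply]
    have h1 : (Ψ a).1 y = ∑ i, a i * u y i := by
      conv_lhs => rw [ha]
      rw [map_sum]
      simp only [map_smul, hui]
      rw [Submodule.coe_sum, Finset.sum_apply]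
      rfl
    rw [h1, PiLp.inner_apply]
    simp
  have huc : Continuous u := by
    refine (PiLp.continuous_toLp 2 _).comp ?_
    exact continuous_pi fun i => hXc _ (Ψ (EuclideanSpace.single i (1 : ℝ))).2
  have huH : ∀ y, ‖u y‖ ≤ H := by
    intro y
    have h1 : ‖u y‖ ^ 2 = (Ψ (u y)).1 y := by rw [← huin, real_inner_self_eq_norm_sq]
    have h2 := le_supNorm_of_cont _ (hXc _ (Ψ (u y)).2) y
    have h3 := hX _ (Ψ (u y)).2
    rw [← hΨn, Real.sqrt_sq (norm_nonneg _)] at h3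
    have h4 := le_abs_self ((Ψ (u y)).1 y)
    by_cases h0 : ‖u y‖ = 0
    · rw [h0]; linarith
    · have : 0 < ‖u y‖ := lt_of_le_of_ne (norm_nonneg _) (Ne.symm h0)
      nlinarith
  refine ⟨u, huc, huH, ?_, ?_, ?_⟩
  · intro a
    simp only [huin]
    exact hΨn a
  · intro f hf
    refine ⟨Ψ.symm ⟨f, hf⟩, fun y => ?_⟩
    rw [huin]; simp
  · have h1 : ∫ y, ‖u y‖ ^ 2 ∂μ = N := by
      have h2 : ∀ y, ‖u y‖ ^ 2 = ∑ i, ((Ψ (EuclideanSpace.single i (1 : ℝ))).1 y) ^ 2 := by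
        intro y
        rw [EuclideanSpace.norm_sq_eq]
        simp [hui]
      simp only [h2]
      rw [integral_finsetSum]
      · simp only [← hΨn]
        simp
      · intro i _
        have hc := hXc _ (Ψ (EuclideanSpace.single i (1 : ℝ))).2
        exact (hc.pow 2).integrable_of_hasCompactSupport (HasCompactSupport.of_compactSpace _)
    rw [← h1]
    calc ∫ y, ‖u y‖ ^ 2 ∂μ ≤ ∫ _, H ^ 2 ∂μ := by
          refine integral_mono_of_nonneg (Filter.Eventually.of_forall fun y => by positivity)
            (integrable_const _) (Filter.Eventually.of_forall fun y => ?_)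
          have := huH y
          dsimp only
          gcongr
      _ = H ^ 2 := by simp

end Repr

open MeasureTheory

section Consts

set_option maxHeartbeats 2000000 in
lemma const_aux (p K c4 L l n F η m C : ℝ) (hp : 1 < p) (hp2 : p ≤ 2) (hK : 0 < K) (hc4 : 0 ≤ c4)
    (hL : 1 ≤ L) (hl : 1 ≤ l) (hn : 1 ≤ n) (hnl : n ≤ l) (hF : 0 < F) (hFl : Real.log F ≤ c4 * l)
    (hη : 0 < η) (hηL : Real.log η⁻¹ ≤ L)
    (hC : C = (16 * K + 4 * K * (6 + c4) + 1) ^ 2)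
    (hm : C * η⁻¹ ^ 2 * L ^ (p / 2) * F * n ^ 2 * l ≤ m) :
    0 < m ∧ 4 * K * n ^ 2 * l * F * (max L (Real.log (4 * m) / l)) ^ (p / 2) ≤ m * η ^ 2 := by
  set B := η⁻¹ ^ 2 * L ^ (p / 2) * F * n ^ 2 * l with hB
  have hL0 : 0 < L := by linarith
  have hl0 : 0 < l := by linarith
  have hn0 : 0 < n := by linarith
  have hLp : 0 < L ^ (p / 2) := Real.rpow_pos_of_pos hL0 _
  have hB0 : 0 < B := by positivity
  have hC0 : 0 < C := by rw [hC]; positivity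
  have hmB : C * B ≤ m := by rw [hB]; linarith
  have hm0 : 0 < m := lt_of_lt_of_le (by positivity) hmB
  refine ⟨hm0, ?_⟩
  set c := m / B with hc
  have hcC : C ≤ c := by rw [hc, le_div_iff₀ hB0]; exact hmB
  have hc0 : 0 < c := by linarith
  have hmc : m = c * B := by rw [hc]; field_simp
  have hsc : 16 * K + 4 * K * (6 + c4) + 1 ≤ √c := by
    apply Real.le_sqrt_of_sq_le; rw [← hC]; exact hcC
  have hs1 : 1 ≤ √c := by linarith [mul_nonneg hK.le hc4]
  have hss : √c * √c = c := Real.mul_self_sqrt hc0.le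
  have hlog4 : Real.log (4 * c) ≤ 4 * √c := by
    have e : 4 * c = (2 * √c) ^ 2 := by rw [← hss]; simp; ring
    rw [e, Real.log_pow]
    have := Real.log_le_self (x := 2 * √c) (by positivity)
    push_cast; linarith
  have hlogB : Real.log B ≤ (6 + c4) * (L * l) := by
    rw [hB, Real.log_mul (by positivity) (by positivity), Real.log_mul (by positivity) (by positivity),
      Real.log_mul (by positivity) (by positivity), Real.log_mul (by positivity) (by positivity),
      Real.log_pow, Real.log_pow, Real.log_rpow hL0]
    have h1 : Real.log L ≤ L := Real.log_le_self hL0.le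
    have h2 : Real.log n ≤ n := Real.log_le_self hn0.le
    have h3 : Real.log l ≤ l := Real.log_le_self hl0.le
    have h4 : p / 2 * Real.log L ≤ 1 * L :=
      mul_le_mul (by linarith) h1 (Real.log_nonneg hL) (by norm_num)
    have h5 : L ≤ L * l := le_mul_of_one_le_right hL0.le hl
    have h6 : l ≤ L * l := le_mul_of_one_le_left hl0.le hL
    have h7 : c4 * l ≤ c4 * (L * l) := mul_le_mul_of_nonneg_left h6 hc4
    push_cast
    linarith
  have hlogm : Real.log (4 * m) / l ≤ L * (4 * √c + (6 + c4)) := by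
    rw [div_le_iff₀ hl0]
    have e : 4 * m = 4 * c * B := by rw [hmc]; ring
    rw [e, Real.log_mul (by positivity) (by positivity)]
    have h6 : 1 ≤ L * l := one_le_mul_of_one_le_of_one_le hL hl
    have h7 : 4 * √c ≤ 4 * √c * (L * l) := by
      have : 0 ≤ 4 * √c := by positivity
      exact le_mul_of_one_le_right this h6
    linarith
  have hmax : max L (Real.log (4 * m) / l) ≤ L * (4 * √c + (6 + c4)) := by
    refine max_le ?_ hlogm
    exact le_mul_of_one_le_right hL0.le (by linarith)
  have hmax0 : 0 ≤ max L (Real.log (4 * m) / l) := le_trans hL0.le (le_max_left _ _)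
  have hpow : (max L (Real.log (4 * m) / l)) ^ (p / 2) ≤ L ^ (p / 2) * (4 * √c + (6 + c4)) := by
    refine (Real.rpow_le_rpow hmax0 hmax (by linarith)).trans ?_
    rw [Real.mul_rpow hL0.le (by positivity)]
    refine mul_le_mul_of_nonneg_left ?_ hLp.le
    calc (4 * √c + (6 + c4)) ^ (p / 2) ≤ (4 * √c + (6 + c4)) ^ (1 : ℝ) :=
          Real.rpow_le_rpow_of_exponent_le (by linarith) (by linarith)
      _ = _ := Real.rpow_one _
  have hfin : 4 * K * (4 * √c + (6 + c4)) ≤ c := by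
    have h8 : 0 ≤ 4 * K * (6 + c4) := by positivity
    calc 4 * K * (4 * √c + (6 + c4)) ≤ (16 * K + 4 * K * (6 + c4) + 1) * √c := by
          have h9 := le_mul_of_one_le_right h8 hs1
          linarith
      _ ≤ √c * √c := by gcongr
      _ = c := hss
  have eB : B * η ^ 2 = L ^ (p / 2) * F * n ^ 2 * l := by rw [hB]; field_simp
  calc 4 * K * n ^ 2 * l * F * (max L (Real.log (4 * m) / l)) ^ (p / 2)
      ≤ 4 * K * n ^ 2 * l * F * (L ^ (p / 2) * (4 * √c + (6 + c4))) := by gcongr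
    _ = (4 * K * (4 * √c + (6 + c4))) * (L ^ (p / 2) * F * n ^ 2 * l) := by ring
    _ ≤ c * (L ^ (p / 2) * F * n ^ 2 * l) := by gcongr
    _ = m * η ^ 2 := by rw [hmc, ← eB]; ring

lemma log_le_logb {x : ℝ} (hx : 1 ≤ x) : Real.log x ≤ Real.logb 2 x := by
  have h2 : 0 < Real.log 2 := Real.log_pos (by norm_num)
  have h3 : Real.log 2 ≤ 1 := by have := Real.log_two_lt_d9; linarith
  unfold Real.logb
  rw [le_div_iff₀ h2]
  have := Real.log_nonneg hx
  nlinarith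

lemma pow_four_choice (p Λ : ℝ) (hp : 1 < p) (hp2 : p ≤ 2) (hΛ : 1 ≤ Λ) :
    ∃ r : ℕ, Λ ≤ 4 ^ r ∧ ((2 : ℝ) ^ p) ^ r ≤ 4 * Λ ^ (p / 2) := by
  obtain ⟨r, h1, h2⟩ := exists_nat_pow_near hΛ (by norm_num : (1 : ℝ) < 4)
  refine ⟨r + 1, h2.le, ?_⟩
  have e4 : ((4 : ℝ) ^ r) ^ (p / 2) = ((2 : ℝ) ^ p) ^ r := by
    rw [← Real.rpow_natCast, ← Real.rpow_natCast, ← Real.rpow_mul (by norm_num),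
      ← Real.rpow_mul (by norm_num)]
    rw [show (4 : ℝ) = 2 ^ (2 : ℝ) by norm_num, ← Real.rpow_mul (by norm_num)]
    congr 1; ring
  have e2 : (2 : ℝ) ^ p ≤ 4 := by
    calc (2 : ℝ) ^ p ≤ 2 ^ (2 : ℝ) := Real.rpow_le_rpow_of_exponent_le (by norm_num) hp2
      _ = 4 := by norm_num
  have e3 : ((4 : ℝ) ^ r) ^ (p / 2) ≤ Λ ^ (p / 2) := Real.rpow_le_rpow (by positivity) h1 (by linarith)
  rw [e4] at e3
  rw [pow_succ]
  have : 0 ≤ ((2 : ℝ) ^ p) ^ r := by positivity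
  nlinarith

end Consts

open MeasureTheory

section Final

lemma ainc_min {Φ : ℝ → ℝ} {p a : ℝ} (ha : 1 ≤ a) (hpre : IsPhiPrefun Φ) (h : AIncP Φ p a) :
    AIncP Φ (min p 2) a := by
  intro s t hs hst
  have ht : 0 < t := hs.trans hst
  have h1 := h s t hs hst
  set p' := min p 2 with hp'
  have hle : p' ≤ p := min_le_left _ _
  have e : ∀ x : ℝ, 0 < x → Φ x / x ^ p' = Φ x / x ^ p * x ^ (p - p') := by
    intro x hx
    rw [Real.rpow_sub hx]
    have := Real.rpow_pos_of_pos hx p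
    have := Real.rpow_pos_of_pos hx p'
    field_simp
  rw [e s hs, e t ht, ← mul_assoc]
  have h2 : 0 ≤ Φ s / s ^ p := div_nonneg (hpre.nonneg s hs.le) (Real.rpow_nonneg hs.le _)
  exact mul_le_mul h1 (Real.rpow_le_rpow hs.le hst.le (by linarith)) (Real.rpow_nonneg hs.le _)
    (h2.trans h1)

set_option maxHeartbeats 2000000 in
lemma main_le2 {Φ : ℝ → ℝ} {p a1 aP q : ℝ} (hΦ : PhiH Φ p a1 aP q) :
    ∃ C : ℝ, 0 < C ∧
      ∀ (Ω : Type) [MetricSpace Ω] [CompactSpace Ω] [MeasurableSpace Ω] [BorelSpace Ω],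
      ∀ (μ : Measure Ω), IsProbabilityMeasure μ →
      ∀ N : ℕ, 1 ≤ N → ∀ H : ℝ, 1 ≤ H →
      ∀ X : Submodule ℝ (Ω → ℝ),
        (∀ f ∈ X, Continuous f) →
        Module.finrank ℝ X = N →
        (∀ f ∈ X, supNorm f ≤ H * Real.sqrt (∫ y, (f y) ^ 2 ∂μ)) →
      ∀ ε : ℝ, 0 < ε → ε ≤ 1 / 2 →
      ∀ δ : ℝ, 0 < δ → δ ≤ 1 →
      ∀ m : ℕ,
        C * (ε * δ)⁻¹ ^ 2 * (Real.logb 2 (ε * δ)⁻¹) ^ (p / 2) *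
            Φ (H ^ (2 / p)) * (Real.logb 2 (2 * N)) ^ 2 *
            Real.logb 2 (2 * H ^ 2) ≤ (m : ℝ) →
        ENNReal.ofReal (1 - δ / 2) ≤
          (Measure.pi fun _ : Fin m => μ)
            {x : Fin m → Ω | ∀ f ∈ X,
              a1⁻¹ * (1 - ε) * luxNorm μ Φ f ≤ discLuxNorm Φ x f ∧
              discLuxNorm Φ x f ≤ a1 * (1 + ε) * luxNorm μ Φ f} := by
  have hp := hΦ.hp
  have hp2 := hΦ.hp2
  have haP := hΦ.haP
  have hq := hΦ.hq
  have hP1 := hΦ.pos one_pos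
  set M : ℝ := 8 * (1 + aP / Φ 1) with hM
  have hM1 : 1 ≤ M := by
    have : 0 < aP / Φ 1 := by positivity
    linarith
  set K : ℝ := 48000 ^ 2 * 81 * 3 * (2 * q ^ 2 * aP * M ^ (q / p)) with hK
  have hMq : 0 < M ^ (q / p) := Real.rpow_pos_of_pos (by linarith) _
  have hK0 : 0 < K := by positivity
  set c4 : ℝ := |Real.log (Φ 1)| + q with hc4
  have hc40 : 0 ≤ c4 := by positivity
  refine ⟨(16 * K + 4 * K * (6 + c4) + 1) ^ 2, by positivity, ?_⟩
  intro Ω _ _ _ _ μ hμ N hN H hH X hXc hXN hX ε hε hε2 δ hδ hδ1 m hm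
  obtain ⟨u, huc, huH, hiso, hrep, hNH⟩ := repr_exists μ N H hH X hXc hXN hN hX
  set η := ε * δ with hη
  have hη0 : 0 < η := by positivity
  have hη2 : η ≤ 1 / 2 := by nlinarith
  have hηi : 2 ≤ η⁻¹ := by
    rw [le_inv_comm₀ (by norm_num) hη0]; linarith
  set L := Real.logb 2 η⁻¹ with hL
  set l := Real.logb 2 (2 * H ^ 2) with hl
  set n := Real.logb 2 (2 * N) with hn
  have hN' : (1 : ℝ) ≤ N := by exact_mod_cast hN
  have hH2 : 1 ≤ H ^ 2 := one_le_pow₀ hH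
  have hlog2 : Real.logb 2 2 = 1 := Real.logb_self_eq_one (by norm_num)
  have hL1 : 1 ≤ L := by
    rw [← hlog2]; exact Real.logb_le_logb_of_le (by norm_num) (by norm_num) hηi
  have hl1 : 1 ≤ l := by
    rw [← hlog2]; exact Real.logb_le_logb_of_le (by norm_num) (by norm_num) (by linarith)
  have hn1 : 1 ≤ n := by
    rw [← hlog2]; exact Real.logb_le_logb_of_le (by norm_num) (by norm_num) (by linarith)
  have hnl : n ≤ l := Real.logb_le_logb_of_le (by norm_num) (by positivity) (by linarith)
  set D0 := H ^ (2 / p) with hD0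
  have hD01 : 1 ≤ D0 := Real.one_le_rpow hH (by positivity)
  have hF0 : 0 < Φ D0 := hΦ.pos (by linarith)
  have hFl : Real.log (Φ D0) ≤ c4 * l := by
    have h1 := hΦ.dec one_pos hD01
    rw [div_one] at h1
    have h2 := Real.log_le_log hF0 h1
    rw [Real.log_mul hP1.ne' (Real.rpow_pos_of_pos (by linarith) _).ne',
      Real.log_rpow (by linarith), hD0, Real.log_rpow (by linarith)] at h2
    have h3 : 2 * Real.log H ≤ l := by
      have := log_le_logb (x := 2 * H ^ 2) (by linarith)
      rw [Real.log_mul (by norm_num) (by positivity), Real.log_pow] at this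
      have h5 := Real.log_pos (x := 2) (by norm_num)
      push_cast at this
      linarith
    have h4 : 0 ≤ Real.log H := Real.log_nonneg hH
    have h5 : 2 / p * Real.log H ≤ 2 * Real.log H := by
      refine mul_le_mul_of_nonneg_right ?_ h4
      rw [div_le_iff₀ (by linarith)]; linarith
    have h6 : q * (2 / p * Real.log H) ≤ q * l :=
      mul_le_mul_of_nonneg_left (h5.trans h3) (by linarith)
    have h7 : Real.log (Φ 1) ≤ |Real.log (Φ 1)| * l :=
      (le_abs_self _).trans (le_mul_of_one_le_right (abs_nonneg _) hl1)
    rw [hc4]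
    linarith
  obtain ⟨hm0, hmain⟩ := const_aux p K c4 L l n (Φ D0) η m _ hp hp2 hK0 hc40 hL1 hl1 hn1 hnl hF0 hFl
    hη0 (log_le_logb (by linarith)) rfl hm
  have hm1 : 1 ≤ m := by exact_mod_cast (Nat.cast_pos (α := ℝ)).1 hm0
  set Λ := max L (Real.log (4 * m) / l) with hΛ
  have hΛ1 : 1 ≤ Λ := hL1.trans (le_max_left _ _)
  obtain ⟨r, hr1, hr2⟩ := pow_four_choice p Λ hp hp2 hΛ1
  set D := (M * H ^ 2) ^ (1 / p) with hD
  have hMH : 0 < M * H ^ 2 := by positivity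
  have hDpos : 0 < D := Real.rpow_pos_of_pos hMH _
  have hDM : D ^ p = M * H ^ 2 := by
    rw [hD, ← Real.rpow_mul hMH.le]
    rw [one_div_mul_cancel (by linarith), Real.rpow_one]
  have hDD0 : D = M ^ (1 / p) * D0 := by
    rw [hD, Real.mul_rpow (by linarith) (by positivity), hD0]
    congr 1
    rw [← Real.rpow_natCast, ← Real.rpow_mul (by linarith)]
    congr 1
    push_cast; ring
  have hPD : Φ D ≤ Φ D0 * M ^ (q / p) := by
    have hle : D0 ≤ D := by
      rw [hDD0]
      exact le_mul_of_one_le_left (by linarith) (Real.one_le_rpow hM1 (by positivity))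
    have h1 := hΦ.dec (by linarith) hle
    have e : D / D0 = M ^ (1 / p) := by
      rw [hDD0]; field_simp
    rw [e, ← Real.rpow_mul (by linarith)] at h1
    have e2 : 1 / p * q = q / p := by ring
    rwa [e2] at h1
  set k := ⌈l⌉₊ + 1 with hk
  have hlk : l ≤ (⌈l⌉₊ : ℝ) := Nat.le_ceil l
  have hkl : (⌈l⌉₊ : ℝ) < l + 1 := Nat.ceil_lt_add_one (by linarith)
  have hk3 : (k : ℝ) ≤ 3 * l := by rw [hk]; push_cast; linarith
  have hlk' : l ≤ (k : ℝ) := by rw [hk]; push_cast; linarith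
  have hk4 : H ^ 2 ≤ 4 ^ (2 * k - 2) := by
    have e1 : 2 * k - 2 = 2 * ⌈l⌉₊ := by omega
    rw [e1]
    have h1 : 2 * H ^ 2 = (2 : ℝ) ^ l := by
      rw [hl, Real.rpow_logb (by norm_num) (by norm_num) (by positivity)]
    have h2 : (2 : ℝ) ^ l ≤ 2 ^ (⌈l⌉₊ : ℝ) := Real.rpow_le_rpow_of_exponent_le (by norm_num) hlk
    rw [Real.rpow_natCast] at h2
    have h3 : (2 : ℝ) ^ ⌈l⌉₊ ≤ 4 ^ (2 * ⌈l⌉₊) := by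
      calc (2 : ℝ) ^ ⌈l⌉₊ ≤ 4 ^ ⌈l⌉₊ := by gcongr; norm_num
        _ ≤ 4 ^ (2 * ⌈l⌉₊) := pow_le_pow_right₀ (by norm_num) (by omega)
    linarith
  have hr : Real.log (4 * m) ≤ k * 4 ^ r := by
    have h1 : Real.log (4 * m) / l ≤ 4 ^ r := (le_max_right _ _).trans hr1
    rw [div_le_iff₀ (by linarith)] at h1
    have h2 : (4 : ℝ) ^ r * l ≤ 4 ^ r * k := by gcongr
    linarith
  set k0 := 4 * ⌈n⌉₊ with hk0
  have hk0n : (k0 : ℝ) + 1 ≤ 9 * n := by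
    have := Nat.ceil_lt_add_one (a := n) (by linarith)
    rw [hk0]; push_cast; linarith
  have hNk0 : N ^ 4 ≤ 2 ^ k0 := by
    have h1 : 2 * (N : ℝ) = (2 : ℝ) ^ n := by
      rw [hn, Real.rpow_logb (by norm_num) (by norm_num) (by positivity)]
    have h2 : (2 : ℝ) ^ n ≤ 2 ^ (⌈n⌉₊ : ℝ) :=
      Real.rpow_le_rpow_of_exponent_le (by norm_num) (Nat.le_ceil n)
    rw [Real.rpow_natCast] at h2
    have h3 : (N : ℝ) ≤ 2 ^ ⌈n⌉₊ := by linarith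
    have h4 : N ≤ 2 ^ ⌈n⌉₊ := by exact_mod_cast h3
    calc N ^ 4 ≤ (2 ^ ⌈n⌉₊) ^ 4 := Nat.pow_le_pow_left h4 4
      _ = 2 ^ k0 := by rw [← pow_mul, hk0, mul_comm]
  have hκ : 2 * (6000 * (k0 + 1) * √(k * ((2 : ℝ) ^ p) ^ r) * √(2 * q ^ 2 * aP * Φ D * m))
      ≤ m * (ε * δ / 4) := by
    rw [← hη]
    have hPDn := hΦ.nn hDpos.le
    have hsq : (k0 + 1 : ℝ) ^ 2 * (k * ((2 : ℝ) ^ p) ^ r) * (2 * q ^ 2 * aP * Φ D) * 48000 ^ 2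
        ≤ m * η ^ 2 := by
      calc (k0 + 1 : ℝ) ^ 2 * (k * ((2 : ℝ) ^ p) ^ r) * (2 * q ^ 2 * aP * Φ D) * 48000 ^ 2
          ≤ (9 * n) ^ 2 * (3 * l * (4 * Λ ^ (p / 2))) * (2 * q ^ 2 * aP * (Φ D0 * M ^ (q / p)))
            * 48000 ^ 2 := by gcongr
        _ = 4 * K * n ^ 2 * l * Φ D0 * Λ ^ (p / 2) := by rw [hK]; ring
        _ ≤ m * η ^ 2 := hmain
    have hA0 : 0 ≤ k * ((2 : ℝ) ^ p) ^ r := by positivity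
    have hB0 : 0 ≤ 2 * q ^ 2 * aP * Φ D * m := by positivity
    refine abs_le_of_sq_le_sq' ?_ (by positivity) |>.2
    rw [mul_pow, mul_pow, mul_pow, Real.sq_sqrt hA0, Real.sq_sqrt hB0]
    have := mul_le_mul_of_nonneg_left hsq hm0.le
    nlinarith
  refine (prob_all hΦ μ hN u huc H hH huH hiso M D le_rfl hDpos hDM k (by omega) hk4 m hm1 r hr k0
    hNk0 ε δ hε (by linarith) hδ hδ1 hκ).trans (measure_mono ?_)
  intro x hx f hf
  obtain ⟨a, ha⟩ := hrep f hf
  refine lux_red hΦ μ x hm1 f (hXc f hf) ε hε hε2 ?_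
  intro c hc
  have e : ∀ y, c * f y = inner ℝ (u y) (c • a) := by
    intro y; rw [ha, inner_smul_right]
  simp only [e] at hc ⊢
  exact hx (c • a) hc

end Final

/-- Remark rem2.1. Under the assumptions of Theorem cor4.1
(`Φ` a Φ-function, `Φ ∈ (aInc)_p ∩ (Dec)`, `p ∈ (1,∞)`), there is `C = C_{Φ,p} > 0` such
that for every `N`-dimensional `X_N ∈ NI_{2,∞}(H)`, `ε ∈ (0,1/2]`, `δ ∈ (0,1]` and
`m ≥ C (εδ)^{-2} (log₂ (εδ)⁻¹)^{min{p,2}/2} Φ(H^{2/min{p,2}}) (log₂ 2N)² log₂ 2H²`,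
i.i.d. points `x₁,…,x_m ∼ μ` satisfy, with probability at least `1 − δ/2`,
`a_Φ(1)⁻¹(1−ε)‖f‖_Φ ≤ ‖f‖_{Φ,x} ≤ a_Φ(1)(1+ε)‖f‖_Φ` for all `f ∈ X_N`. -/
theorem statement10 (p : ℝ) (hp : 1 < p)
    (Φ : ℝ → ℝ) (hpre : IsPhiPrefun Φ)
    (a1 : ℝ) (ha1 : 1 ≤ a1) (hA1 : AIncP Φ 1 a1)
    (aP : ℝ) (haP : 1 ≤ aP) (hAp : AIncP Φ p aP)
    (hdec : ∃ q : ℝ, 1 ≤ q ∧ DecQ Φ q) :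
    ∃ C : ℝ, 0 < C ∧
      ∀ (Ω : Type) [MetricSpace Ω] [CompactSpace Ω] [MeasurableSpace Ω] [BorelSpace Ω],
      ∀ (μ : Measure Ω), IsProbabilityMeasure μ →
      ∀ N : ℕ, 1 ≤ N → ∀ H : ℝ, 1 ≤ H →
      ∀ X : Submodule ℝ (Ω → ℝ),
        (∀ f ∈ X, Continuous f) →
        Module.finrank ℝ X = N →
        (∀ f ∈ X, supNorm f ≤ H * Real.sqrt (∫ y, (f y) ^ 2 ∂μ)) →
      ∀ ε : ℝ, 0 < ε → ε ≤ 1 / 2 →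
      ∀ δ : ℝ, 0 < δ → δ ≤ 1 →
      ∀ m : ℕ,
        C * (ε * δ)⁻¹ ^ 2 * (Real.logb 2 (ε * δ)⁻¹) ^ (min p 2 / 2) *
            Φ (H ^ (2 / min p 2)) * (Real.logb 2 (2 * N)) ^ 2 *
            Real.logb 2 (2 * H ^ 2) ≤ (m : ℝ) →
        ENNReal.ofReal (1 - δ / 2) ≤
          (Measure.pi fun _ : Fin m => μ)
            {x : Fin m → Ω | ∀ f ∈ X,
              a1⁻¹ * (1 - ε) * luxNorm μ Φ f ≤ discLuxNorm Φ x f ∧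
              discLuxNorm Φ x f ≤ a1 * (1 + ε) * luxNorm μ Φ f} := by
  obtain ⟨q, hq, hdq⟩ := hdec
  exact main_le2 ⟨hpre, lt_min hp (by norm_num), min_le_right _ _, ha1, hA1, haP,
    ainc_min haP hpre hAp, hq, hdq⟩
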